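/- For almost all integers n that are sums of two squares, r₂(n) = (log n)^{(log 2)/2 + o(1)}. More precisely: for every ε > 0, the number of n ≤ N in S = {a²+b² : a,b ∈ ℤ} for which |log r₂(n)/log log n − (log 2)/2| > ε is o(#{n ∈ S : n ≤ N}) as N → ∞. -/

import Mathlib

/-- r₂(n), the number of lattice points on the circle of radius √n. -/
noncomputable def r2 (n : ℕ) : ℕ := Set.ncard {l : ℤ × ℤ | l.1 ^ 2 + l.2 ^ 2 = (n : ℤ)}

namespace S18
open Finset ArithmeticFunction

noncomputable def X (n : ℕ) : ℝ := if n % 2 = 0 then 0 else if n % 4 = 1 then 1 else -1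

lemma X_eq (n : ℕ) : X n = ((ZMod.χ₄ n : ℤ) : ℝ) := by
  rw [ZMod.χ₄_nat_eq_if_mod_four, X]
  split_ifs <;> simp

lemma X_mul (m n : ℕ) : X (m * n) = X m * X n := by
  rw [X_eq, X_eq, X_eq, Nat.cast_mul, map_mul, Int.cast_mul]

lemma abs_X_le (n : ℕ) : |X n| ≤ 1 := by
  rw [X]; split_ifs <;> simp

lemma X_zero : X 0 = 0 := by simp [X]

lemma X_partial (n : ℕ) : ∑ i ∈ range n, X i = if n % 4 = 2 ∨ n % 4 = 3 then 1 else 0 := by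
  induction n with
  | zero => simp
  | succ n ih =>
    rw [sum_range_succ, ih, X]
    have : n % 4 = 0 ∨ n % 4 = 1 ∨ n % 4 = 2 ∨ n % 4 = 3 := by omega
    rcases this with h | h | h | h
    · have h2 : n % 2 = 0 := by omega
      have h3 : (n+1) % 4 = 1 := by omega
      simp [h, h2, h3]
    · have h2 : n % 2 = 1 := by omega
      have h3 : (n+1) % 4 = 2 := by omega
      simp [h, h2, h3]
    · have h2 : n % 2 = 0 := by omega
      have h3 : (n+1) % 4 = 3 := by omega
      simp [h, h2, h3]
    · have h2 : n % 2 = 1 := by omega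
      have h3 : (n+1) % 4 = 0 := by omega
      simp [h, h2, h3]

lemma X_test (f : ℕ → ℝ) (a b : ℕ) (hab : a ≤ b) (hf0 : ∀ n, a ≤ n → 0 ≤ f n)
    (hf : ∀ n, a ≤ n → f (n+1) ≤ f n) : |∑ i ∈ Ico a b, X i * f i| ≤ f a := by
  set P : ℕ → ℝ := fun n => ∑ i ∈ range n, X i with hP
  have hP0 : ∀ n, 0 ≤ P n := by intro n; simp only [hP, X_partial]; split_ifs <;> simp
  have hP1 : ∀ n, P n ≤ 1 := by intro n; simp only [hP, X_partial]; split_ifs <;> simp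
  have key : -f a ≤ ∑ i ∈ Ico a b, X i * f i - P b * f b ∧
      ∑ i ∈ Ico a b, X i * f i - P b * f b + f b ≤ f a := by
    induction b, hab using Nat.le_induction with
    | base =>
      simp only [Ico_self, sum_empty]
      have := hf0 a le_rfl
      constructor <;> nlinarith [hP0 a, hP1 a]
    | succ b hb ih =>
      rw [sum_Ico_succ_top hb]
      have e : P (b+1) = P b + X b := by simp [hP, sum_range_succ]
      have h1 := hf b hb
      have h2 := mul_nonneg (hP0 (b+1)) (sub_nonneg.2 h1)
      have h3 := mul_nonneg (sub_nonneg.2 (hP1 (b+1))) (sub_nonneg.2 h1)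
      rw [e] at h2 h3 ⊢
      constructor <;> nlinarith [ih.1, ih.2]
  have := hf0 b hab
  rw [abs_le]
  have h2 := mul_nonneg (hP0 b) this
  have h3 := mul_nonneg (sub_nonneg.2 (hP1 b)) this
  constructor <;> nlinarith [key.1, key.2]

noncomputable def Q (n : ℕ) : ℝ := ∑ i ∈ range (n+1), X i / i

lemma Q_sub (a b : ℕ) (hab : a ≤ b) : |Q b - Q a| ≤ 1 / (a+1 : ℝ) := by
  have h := X_test (fun n => 1 / (n:ℝ)) (a+1) (b+1) (by omega) (fun n _ => by positivity)
    (fun n hn => by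
      apply one_div_le_one_div_of_le
      · exact_mod_cast (by omega : 0 < n)
      · push_cast; linarith)
  have e : Q b - Q a = ∑ i ∈ Ico (a+1) (b+1), X i * (1 / (i:ℝ)) := by
    rw [Q, Q, sum_Ico_eq_sub _ (by omega : a+1 ≤ b+1)]
    simp [div_eq_mul_inv]
  rw [e]; simpa using h

lemma exists_L : ∃ L : ℝ, 1/2 ≤ L ∧ ∀ n, |Q n - L| ≤ 1 / (n+1 : ℝ) := by
  have hc : CauchySeq Q := by
    refine cauchySeq_of_le_tendsto_0' (fun n : ℕ => 1 / ((n:ℝ)+1)) ?_ tendsto_one_div_add_atTop_nhds_zero_nat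
    intro n m h
    rw [dist_comm, Real.dist_eq]; exact Q_sub n m h
  obtain ⟨L, hL⟩ := cauchySeq_tendsto_of_complete hc
  have h1 : ∀ n, |Q n - L| ≤ 1 / (n+1 : ℝ) := by
    intro n
    rw [abs_sub_comm]
    refine le_of_tendsto ((hL.sub_const (Q n)).abs) ?_
    filter_upwards [Filter.eventually_ge_atTop n] with m hm
    exact Q_sub n m hm
  refine ⟨L, ?_, h1⟩
  have := h1 2
  have e : Q 2 = 1 := by simp [Q, sum_range_succ, X]
  rw [e, abs_le] at this
  norm_num at this
  linarith [this.2]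

lemma sum_X_log (N : ℕ) : |∑ n ∈ Icc 1 N, X n * (Real.log n / n)| ≤ 1 := by
  have hs : ∀ N, ∑ n ∈ Icc 1 N, X n * (Real.log n / n) = ∑ n ∈ Ico 1 (N+1), X n * (Real.log n / n) := by
    intro N; rfl
  rw [hs]
  rcases Nat.lt_or_ge N 2 with h | h
  · interval_cases N <;> simp
  rw [← sum_Ico_consecutive _ (by omega : 1 ≤ 3) (by omega : 3 ≤ N+1)]
  have h0 : ∑ n ∈ Ico 1 3, X n * (Real.log n / n) = 0 := by
    simp [sum_Ico_succ_top, X]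
  rw [h0, zero_add]
  have h := X_test (fun n => Real.log n / n) 3 (N+1) (by omega)
    (fun n hn => by positivity) (fun n hn => by
      have h3 : (3:ℝ) ≤ n := by exact_mod_cast hn
      have he := Real.exp_one_lt_d9
      exact Real.log_div_self_antitoneOn (by simp; linarith) (by simp; linarith) (by push_cast; linarith))
  refine h.trans ?_
  have : Real.log ((3:ℕ):ℝ) ≤ 3 := (Real.log_le_sub_one_of_pos (by norm_num)).trans (by norm_num)
  rw [div_le_one (by norm_num)]; exact_mod_cast this

lemma sum_div_swap (F : ℕ → ℕ → ℝ) (N : ℕ) :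
    ∑ n ∈ Icc 1 N, ∑ d ∈ n.divisors, F d (n / d) = ∑ d ∈ Icc 1 N, ∑ m ∈ Icc 1 (N / d), F d m := by
  rw [sum_sigma', sum_sigma']
  refine sum_bij' (fun x _ => ⟨x.2, x.1 / x.2⟩) (fun x _ => ⟨x.1 * x.2, x.1⟩) ?_ ?_ ?_ ?_ ?_
  · rintro ⟨n, d⟩ h
    simp only [mem_sigma, mem_Icc, Nat.mem_divisors] at h ⊢
    obtain ⟨⟨h1, h2⟩, h3, h4⟩ := h
    have hd := Nat.pos_of_dvd_of_pos h3 h1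
    exact ⟨⟨hd, (Nat.le_of_dvd h1 h3).trans h2⟩, Nat.div_pos (Nat.le_of_dvd h1 h3) hd, Nat.div_le_div_right h2⟩
  · rintro ⟨d, m⟩ h
    simp only [mem_sigma, mem_Icc, Nat.mem_divisors] at h ⊢
    obtain ⟨⟨h1, h2⟩, h3, h4⟩ := h
    have : d * m ≤ N := (Nat.mul_le_mul_left d h4).trans (Nat.mul_div_le N d)
    refine ⟨⟨Nat.mul_pos h1 h3, this⟩, dvd_mul_right _ _, (Nat.mul_pos h1 h3).ne'⟩
  · rintro ⟨n, d⟩ h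
    simp only [mem_sigma, mem_Icc, Nat.mem_divisors] at h ⊢
    rw [Nat.mul_div_cancel' h.2.1]
  · rintro ⟨d, m⟩ h
    simp only [mem_sigma, mem_Icc] at h ⊢
    rw [Nat.mul_div_cancel_left _ h.1.1]
  · rintro ⟨n, d⟩ h
    rfl

lemma psi_le (N : ℕ) : ∑ n ∈ Icc 1 N, Λ n ≤ 6 * N := by
  have h := Chebyshev.psi_le_const_mul_self (x := (N:ℝ)) (by positivity)
  have h4 : Real.log 4 ≤ 2 := by
    have : (4:ℝ) = 2^2 := by norm_num
    rw [this, Real.log_pow]; have := Real.log_two_lt_d9; push_cast; linarith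
  have e : Chebyshev.psi (N:ℝ) = ∑ n ∈ Icc 1 N, Λ n := by
    rw [Chebyshev.psi]; simp; rfl
  rw [← e]
  have : (0:ℝ) ≤ N := by positivity
  nlinarith

lemma sum_X_Λ : ∃ C : ℝ, ∀ N : ℕ, |∑ n ∈ Icc 1 N, X n * (Λ n / n)| ≤ C := by
  obtain ⟨L, hL, hQ⟩ := exists_L
  refine ⟨14, fun N => ?_⟩
  rcases Nat.eq_zero_or_pos N with rfl | hN
  · simp
  have h1 : ∑ n ∈ Icc 1 N, X n * (Real.log n / n) =
      ∑ d ∈ Icc 1 N, X d * (Λ d / d) * Q (N / d) := by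
    have := sum_div_swap (fun d m => X d * (Λ d / d) * (X m / m)) N
    have hq : ∀ n, Q n = ∑ m ∈ Icc 1 n, X m / m := by
      intro n; rw [Q, range_eq_Ico, sum_eq_sum_Ico_succ_bot (by omega)]; simp [X_zero]; rfl
    simp_rw [hq, mul_sum, ← this]
    refine sum_congr rfl fun n hn => ?_
    rw [← vonMangoldt_sum, sum_div, mul_sum]
    refine sum_congr rfl fun d hd => ?_
    rw [Nat.mem_divisors] at hd
    obtain ⟨⟨m, rfl⟩, h0⟩ := hd
    have hd0 : d ≠ 0 := by rintro rfl; simp at h0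
    have hm0 : m ≠ 0 := by rintro rfl; simp at h0
    rw [Nat.mul_div_cancel_left _ (Nat.pos_of_ne_zero hd0), X_mul]
    push_cast
    field_simp
  have h2 : ∑ d ∈ Icc 1 N, X d * (Λ d / d) * Q (N / d) =
    L * ∑ d ∈ Icc 1 N, X d * (Λ d / d) + ∑ d ∈ Icc 1 N, X d * (Λ d / d) * (Q (N / d) - L) := by
    rw [mul_sum, ← sum_add_distrib]
    refine sum_congr rfl fun d _ => by ring
  have h3 : |∑ d ∈ Icc 1 N, X d * (Λ d / d) * (Q (N / d) - L)| ≤ 6 := by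
    refine (abs_sum_le_sum_abs _ _).trans ?_
    have : ∀ d ∈ Icc 1 N, |X d * (Λ d / d) * (Q (N / d) - L)| ≤ Λ d / N := by
      intro d hd
      rw [mem_Icc] at hd
      have hd0 : (0:ℝ) < d := by exact_mod_cast hd.1
      have hΛ : 0 ≤ Λ d := vonMangoldt_nonneg
      rw [abs_mul, abs_mul, abs_of_nonneg (div_nonneg hΛ hd0.le)]
      have hN0 : (0:ℝ) < N := by exact_mod_cast hN
      have hb : |Q (N / d) - L| ≤ d / N := by
        refine (hQ _).trans ?_
        rw [div_le_div_iff₀ (by positivity) hN0, one_mul]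
        have : N < d * (N / d + 1) := Nat.lt_mul_div_succ N hd.1
        exact_mod_cast this.le
      calc |X d| * (Λ d / d) * |Q (N / d) - L| ≤ 1 * (Λ d / d) * (d / N) := by
            gcongr; exact abs_X_le d
        _ = Λ d / N := by field_simp
    refine (sum_le_sum this).trans ?_
    rw [← sum_div, div_le_iff₀ (by exact_mod_cast hN)]
    exact psi_le N
  have h4 := sum_X_log N
  rw [h1, h2] at h4
  rw [abs_le] at h3 h4 ⊢
  constructor
  · by_contra hc
    push Not at hc
    nlinarith
  · by_contra hc
    push Not at hc
    nlinarith

lemma sum_Λ : ∃ C : ℝ, ∀ N : ℕ, 1 ≤ N → |∑ n ∈ Icc 1 N, Λ n / n - Real.log N| ≤ C := by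
  refine ⟨6, fun N hN => ?_⟩
  have hN0 : (0:ℝ) < N := by exact_mod_cast hN
  have h1 : ∑ n ∈ Icc 1 N, Real.log n = ∑ d ∈ Icc 1 N, Λ d * ((N / d : ℕ) : ℝ) := by
    have := sum_div_swap (fun d m => Λ d) N
    simp only [sum_const, Nat.card_Icc, add_tsub_cancel_right, nsmul_eq_mul] at this
    simp_rw [vonMangoldt_sum] at this
    rw [this]
    exact sum_congr rfl fun d _ => by ring
  have h2 : ∑ n ∈ Icc 1 N, Real.log n = Real.log (N.factorial) := by
    clear hN hN0 h1
    induction N with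
    | zero => simp
    | succ n ih =>
      rw [sum_Icc_succ_top (by omega), ih, Nat.factorial_succ, Nat.cast_mul, Real.log_mul (by positivity) (by positivity)]
      ring
  have h3 : Real.log N.factorial ≤ N * Real.log N := by
    rw [← Real.log_pow]
    apply Real.log_le_log (by positivity)
    exact_mod_cast Nat.factorial_le_pow N
  have h4 : N * Real.log N - N ≤ Real.log N.factorial := by
    have := Stirling.le_log_factorial_stirling (n := N) (by omega)
    have h5 : 0 ≤ Real.log N := Real.log_natCast_nonneg N
    have h6 : 0 ≤ Real.log (2 * Real.pi) := Real.log_nonneg (by linarith [Real.pi_gt_three])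
    linarith
  have h5 : ∑ d ∈ Icc 1 N, Λ d * ((N / d : ℕ) : ℝ) ≤ N * ∑ n ∈ Icc 1 N, Λ n / n := by
    rw [mul_sum]
    refine sum_le_sum fun d _ => ?_
    have : ((N / d : ℕ) : ℝ) ≤ N / d := Nat.cast_div_le
    calc Λ d * ((N / d : ℕ) : ℝ) ≤ Λ d * (N / d) := by gcongr
      _ = _ := by ring
  have h6 : N * ∑ n ∈ Icc 1 N, Λ n / n - 6 * N ≤ ∑ d ∈ Icc 1 N, Λ d * ((N / d : ℕ) : ℝ) := by
    have h7 := psi_le N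
    suffices N * ∑ n ∈ Icc 1 N, Λ n / n - ∑ n ∈ Icc 1 N, Λ n ≤ ∑ d ∈ Icc 1 N, Λ d * ((N / d : ℕ) : ℝ) by linarith
    rw [mul_sum, ← sum_sub_distrib]
    refine sum_le_sum fun d hd => ?_
    rw [mem_Icc] at hd
    have hd0 : (0:ℝ) < d := by exact_mod_cast hd.1
    have : N < d * (N / d + 1) := Nat.lt_mul_div_succ N hd.1
    have h8 : (N:ℝ) / d ≤ ((N / d : ℕ) : ℝ) + 1 := by
      rw [div_le_iff₀ hd0, mul_comm]; exact_mod_cast this.le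
    have hΛ : 0 ≤ Λ d := vonMangoldt_nonneg
    calc N * (Λ d / d) - Λ d = Λ d * (N / d - 1) := by ring
      _ ≤ Λ d * ((N / d : ℕ) : ℝ) := by gcongr; linarith
  rw [abs_le]
  constructor
  · by_contra hc
    push Not at hc
    nlinarith
  · by_contra hc
    push Not at hc
    nlinarith

/-- Mertens weights -/
noncomputable def A (i N : ℕ) : ℝ := ∑ p ∈ Icc 1 N with p.Prime ∧ p % 4 = i, Real.log p / p

lemma A1_le : ∃ C : ℝ, ∀ N : ℕ, 1 ≤ N → A 1 N ≤ Real.log N / 2 + C := by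
  obtain ⟨C1, h1⟩ := sum_X_Λ
  obtain ⟨C2, h2⟩ := sum_Λ
  refine ⟨(C1 + C2)/2, fun N hN => ?_⟩
  have h1 := (abs_le.1 (h1 N)).2
  have h2 := (abs_le.1 (h2 N hN)).2
  suffices A 1 N ≤ (∑ n ∈ Icc 1 N, Λ n / n + ∑ n ∈ Icc 1 N, X n * (Λ n / n)) / 2 by linarith
  rw [← sum_add_distrib, sum_div, A, sum_filter]
  refine sum_le_sum fun n _ => ?_
  have hΛ : 0 ≤ Λ n / n := div_nonneg vonMangoldt_nonneg (by positivity)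
  have := (abs_le.1 (abs_X_le n)).1
  split_ifs with h
  · have : X n = 1 := by have : n % 2 = 1 := by omega
                         simp [X, h.2, this]
    rw [this, vonMangoldt_apply_prime h.1]; linarith
  · nlinarith

lemma A3_le : ∃ C : ℝ, ∀ N : ℕ, 1 ≤ N → A 3 N ≤ Real.log N / 2 + C := by
  obtain ⟨C1, h1⟩ := sum_X_Λ
  obtain ⟨C2, h2⟩ := sum_Λ
  refine ⟨(C1 + C2)/2, fun N hN => ?_⟩
  have h1 := (abs_le.1 (h1 N)).1
  have h2 := (abs_le.1 (h2 N hN)).2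
  suffices A 3 N ≤ (∑ n ∈ Icc 1 N, Λ n / n - ∑ n ∈ Icc 1 N, X n * (Λ n / n)) / 2 by linarith
  rw [← sum_sub_distrib, sum_div, A, sum_filter]
  refine sum_le_sum fun n _ => ?_
  have hΛ : 0 ≤ Λ n / n := div_nonneg vonMangoldt_nonneg (by positivity)
  have := (abs_le.1 (abs_X_le n)).2
  split_ifs with h
  · have : X n = -1 := by have : n % 2 = 1 := by omega
                          simp [X, h.2, this]
    rw [this, vonMangoldt_apply_prime h.1]; linarith
  · nlinarith

lemma A1_ge : ∃ C : ℝ, ∀ N : ℕ, 1 ≤ N → Real.log N / 2 - C ≤ A 1 N := by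
  obtain ⟨C1, h1⟩ := sum_X_Λ
  obtain ⟨C2, h2⟩ := sum_Λ
  have hs := vonMangoldt.summable_residueClass_non_primes_div (q := 1) (a := (0 : ZMod 1))
  set F : ℕ → ℝ := fun n : ℕ ↦ (if n.Prime then 0 else vonMangoldt.residueClass (0 : ZMod 1) n) / n with hF
  have hF0 : ∀ n, 0 ≤ F n := by
    intro n; simp only [hF]
    split_ifs
    · simp
    · exact div_nonneg (vonMangoldt.residueClass_nonneg _ _) (by positivity)
  have hFe : ∀ n, ¬ n.Prime → F n = Λ n / n := by
    intro n hn
    simp only [hF, if_neg hn, vonMangoldt.residueClass]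
    congr 1
    rw [Set.indicator_of_mem]
    exact Subsingleton.elim _ _
  refine ⟨(C1 + C2)/2 + ∑' n, F n + 1, fun N hN => ?_⟩
  have h1 := (abs_le.1 (h1 N)).1
  have h2 := (abs_le.1 (h2 N hN)).1
  have h3 : ∑ n ∈ Icc 1 N, F n ≤ ∑' n, F n := hs.sum_le_tsum _ (fun n _ => hF0 n)
  have h4 : ∑ n ∈ Icc 1 N, (if n = 2 then (1:ℝ) else 0) ≤ 1 := by
    rw [sum_ite_eq']; split_ifs <;> simp
  suffices (∑ n ∈ Icc 1 N, Λ n / n + ∑ n ∈ Icc 1 N, X n * (Λ n / n)) / 2 ≤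
    A 1 N + ∑ n ∈ Icc 1 N, F n + ∑ n ∈ Icc 1 N, (if n = 2 then (1:ℝ) else 0) by linarith
  rw [← sum_add_distrib, sum_div, A, sum_filter, ← sum_add_distrib, ← sum_add_distrib]
  refine sum_le_sum fun n _ => ?_
  have hΛ : 0 ≤ Λ n / n := div_nonneg vonMangoldt_nonneg (by positivity)
  have hX := (abs_le.1 (abs_X_le n)).2
  by_cases hp : n.Prime
  · rcases hp.eq_two_or_odd with rfl | ho
    · have e : X 2 = 0 := by simp [X]
      have := hF0 2
      rw [e, vonMangoldt_apply_prime hp]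
      have := Real.log_two_lt_d9
      norm_num
      linarith
    · have h2 : n ≠ 2 := by rintro rfl; simp at ho
      by_cases h : n % 4 = 1
      · have := hF0 n
        simp only [hp, h, h2, vonMangoldt_apply_prime hp, and_self, if_true, if_false]
        rw [vonMangoldt_apply_prime hp] at hΛ
        nlinarith
      · have : X n = -1 := by simp [X, ho, h]
        have := hF0 n
        simp only [h, h2, and_false, if_false]
        nlinarith
  · rw [hFe n hp]
    have : (0:ℝ) ≤ if n = 2 then (1:ℝ) else 0 := by split_ifs <;> simp
    simp only [hp, false_and, if_false]
    nlinarith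

lemma A_sum_le (i : ℕ) (h : ∃ C : ℝ, ∀ N : ℕ, 1 ≤ N → A i N ≤ Real.log N / 2 + C) :
    ∃ C : ℝ, 0 ≤ C ∧ ∀ N : ℕ, 2 ≤ N → ∑ p ∈ Icc 1 N with p.Prime ∧ p % 4 = i, (1:ℝ) / p ≤
      Real.log (Real.log N) / 2 + C := by
  obtain ⟨C, hC⟩ := h
  set D := max C 0 with hD
  have hD0 : 0 ≤ D := le_max_right _ _
  have hA : ∀ N, 1 ≤ N → A i N ≤ Real.log N / 2 + D := fun N hN =>
    (hC N hN).trans (by gcongr; exact le_max_left _ _)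
  have l2 : 0 < Real.log 2 := Real.log_pos (by norm_num)
  have hA1 : A i 1 = 0 := by
    rw [A]; apply sum_eq_zero; intro p hp; simp at hp
    have := hp.2.1.two_le; omega
  -- claim
  have key : ∀ N : ℕ, 2 ≤ N → ∑ p ∈ Icc 1 N with p.Prime ∧ p % 4 = i, (1:ℝ) / p ≤
      A i N / Real.log N + (Real.log (Real.log N) - Real.log (Real.log 2)) / 2
       + D * (1 / Real.log 2 - 1 / Real.log N) := by
    intro N hN
    induction N, hN using Nat.le_induction with
    | base =>
      have e : A i 2 = A i 2 := rfl
      rw [A, sum_filter, sum_div, sum_filter]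
      simp only [Nat.cast_ofNat, sub_self, zero_div, mul_zero, add_zero]
      refine sum_le_sum fun p hp => ?_
      rw [mem_Icc] at hp
      split_ifs with h
      · have : p = 2 := by have := h.1.two_le; omega
        subst this
        apply le_of_eq; push_cast; field_simp
      · simp
    | succ n hn ih =>
      have hn1 : (1:ℝ) < n := by exact_mod_cast (by omega : 1 < n)
      have hl : 0 < Real.log n := Real.log_pos hn1
      have hl1 : Real.log n < Real.log ((n+1 : ℕ):ℝ) := Real.log_lt_log (by linarith) (by push_cast; linarith)
      set u := Real.log n with hu
      set v := Real.log ((n+1 : ℕ):ℝ) with hv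
      have hv0 : 0 < v := hl.trans hl1
      set t : ℝ := if (n+1).Prime ∧ (n+1) % 4 = i then v / ((n+1 : ℕ):ℝ) else 0 with ht
      have e1 : A i (n+1) = A i n + t := by
        rw [A, A, sum_filter, sum_Icc_succ_top (by omega), ← sum_filter]
      have e2 : ∑ p ∈ Icc 1 (n+1) with p.Prime ∧ p % 4 = i, (1:ℝ) / p =
        ∑ p ∈ Icc 1 n with p.Prime ∧ p % 4 = i, (1:ℝ) / p + t / v := by
        rw [sum_filter, sum_Icc_succ_top (by omega), ← sum_filter, ht]
        congr 1
        split_ifs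
        · field_simp
        · simp
      rw [e1, e2]
      have h1 := hA n (by omega)
      have h2 : A i n * (1/u - 1/v) ≤ (u/2 + D) * (1/u - 1/v) := by
        apply mul_le_mul_of_nonneg_right h1
        rw [sub_nonneg]; exact one_div_le_one_div_of_le hl hl1.le
      have h3 : 1 - u / v ≤ Real.log v - Real.log u := by
        have := Real.add_one_le_exp (-(Real.log v - Real.log u))
        have e : Real.exp (-(Real.log v - Real.log u)) = u / v := by
          rw [neg_sub, Real.exp_sub, Real.exp_log hl, Real.exp_log hv0]
        rw [e] at this; linarith
      have h4 : (u/2 + D) * (1/u - 1/v) = (1 - u/v)/2 + D * (1/u - 1/v) := by field_simp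
      have h5 : (A i n + t) / v = A i n / u - A i n * (1/u - 1/v) + t / v := by field_simp; ring
      rw [h5]
      rw [h4] at h2
      linarith
  refine ⟨1/2 + D / Real.log 2 + |Real.log (Real.log 2)|/2 , by positivity, fun N hN => (key N hN).trans ?_⟩
  have hn1 : (1:ℝ) < N := by exact_mod_cast (by omega : 1 < N)
  have hl : 0 < Real.log N := Real.log_pos hn1
  have h1 : A i N / Real.log N ≤ 1/2 + D * (1/Real.log N) := by
    rw [div_le_iff₀ hl]
    refine (hA N (by omega)).trans (le_of_eq ?_); field_simp
  have h2 := neg_abs_le (Real.log (Real.log 2))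
  have h3 : D / Real.log 2 = D * (1/Real.log 2) := by ring
  linarith

lemma primes1_count : ∃ K : ℕ, 1 ≤ K ∧ ∃ Y : ℕ, ∀ y : ℕ, Y ≤ y →
    (y:ℝ) / (K * Real.log y) ≤ #{p ∈ Icc (y / K + 1) y | p.Prime ∧ p % 4 = 1} := by
  obtain ⟨C1, h1⟩ := A1_le
  obtain ⟨C2, h2⟩ := A1_ge
  obtain ⟨K, hK⟩ := exists_nat_ge (Real.exp (2 * (1 + C1 + C2)))
  have hK1 : 1 ≤ K := by
    have : 0 < (K:ℝ) := (Real.exp_pos _).trans_le hK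
    exact_mod_cast this
  have hK0 : (0:ℝ) < K := by exact_mod_cast hK1
  have hlK : 2 * (1 + C1 + C2) ≤ Real.log K := by
    rw [Real.le_log_iff_exp_le hK0]; exact hK
  refine ⟨K, hK1, K + 2, fun y hy => ?_⟩
  have hyK : 1 ≤ y / K := Nat.div_pos (by omega) hK1
  have hy0 : (0:ℝ) < y := by exact_mod_cast (by omega : 0 < y)
  have ha := h1 (y / K) hyK
  have hb := h2 y (by omega)
  have hc : Real.log ((y / K : ℕ):ℝ) ≤ Real.log y - Real.log K := by
    rw [← Real.log_div hy0.ne' hK0.ne']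
    exact Real.log_le_log (by exact_mod_cast hyK) Nat.cast_div_le
  have hd : A 1 y = A 1 (y / K) + ∑ p ∈ Icc (y / K + 1) y with p.Prime ∧ p % 4 = 1, Real.log p / p := by
    rw [A, A, sum_filter, sum_filter, sum_filter]
    exact (sum_Ico_consecutive _ (by omega : 1 ≤ y / K + 1) (by have := Nat.div_le_self y K; omega : y / K + 1 ≤ y + 1)).symm
  have he : ∑ p ∈ Icc (y / K + 1) y with p.Prime ∧ p % 4 = 1, Real.log p / p ≤
      #{p ∈ Icc (y / K + 1) y | p.Prime ∧ p % 4 = 1} • (Real.log y * K / y) := by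
    refine sum_le_card_nsmul _ _ _ fun p hp => ?_
    simp only [mem_filter, mem_Icc] at hp
    have hp0 : (0:ℝ) < p := by exact_mod_cast hp.2.1.pos
    have h1 : y < K * p := by
      have := Nat.lt_mul_div_succ y hK1
      exact this.trans_le (Nat.mul_le_mul_left _ hp.1.1)
    have h2 : (y:ℝ) ≤ K * p := by exact_mod_cast h1.le
    have h3 : Real.log p ≤ Real.log y := Real.log_le_log hp0 (by exact_mod_cast hp.1.2)
    have h4 : 0 ≤ Real.log p := Real.log_natCast_nonneg p
    rw [div_le_div_iff₀ hp0 hy0]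
    calc Real.log p * y ≤ Real.log y * (K * p) := by gcongr
      _ = _ := by ring
  rw [nsmul_eq_mul] at he
  have hl : 0 < Real.log y := Real.log_pos (by exact_mod_cast (by omega : 1 < y))
  rw [div_le_iff₀ (by positivity)]
  have h1 : 1 ≤ (#{p ∈ Icc (y / K + 1) y | p.Prime ∧ p % 4 = 1} : ℝ) * (Real.log y * K / y) := by linarith
  rw [← mul_div_assoc, le_div_iff₀ hy0] at h1
  linarith
end S18

namespace S18
open Finset ArithmeticFunction

def isS (n : ℕ) : Prop := ∃ a b : ℤ, a ^ 2 + b ^ 2 = (n : ℤ)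

lemma isS_mul {m n : ℕ} (hm : isS m) (hn : isS n) : isS (m * n) := by
  obtain ⟨a, b, h1⟩ := hm
  obtain ⟨c, d, h2⟩ := hn
  refine ⟨a * c - b * d, a * d + b * c, ?_⟩
  push_cast
  rw [← h1, ← h2]; ring

lemma isS_prime {p : ℕ} (hp : p.Prime) (h : p % 4 ≠ 3) : isS p := by
  have : Fact p.Prime := ⟨hp⟩
  obtain ⟨a, b, h⟩ := Nat.Prime.sq_add_sq h
  exact ⟨a, b, by exact_mod_cast h⟩

lemma isS_sq (p : ℕ) : isS (p * p) := ⟨p, 0, by push_cast; ring⟩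

lemma isS_decomp (n : ℕ) : 0 < n → ∃ (m : ℕ) (P : Finset ℕ), isS m ∧ (∀ p ∈ P, p.Prime ∧ p % 4 = 3) ∧
    n = m * ∏ p ∈ P, p := by
  classical
  induction n using induction_on_primes with
  | zero => simp
  | one => exact fun _ => ⟨1, ∅, ⟨1, 0, by norm_num⟩, by simp, by simp⟩
  | prime_mul p a hp ih =>
    intro h
    have ha : 0 < a := Nat.pos_of_mul_pos_left h
    obtain ⟨m, P, hm, hP, e⟩ := ih ha
    by_cases h3 : p % 4 = 3
    · by_cases hpP : p ∈ P
      · refine ⟨m * (p * p), P.erase p, isS_mul hm (isS_sq p), fun q hq => hP q (mem_of_mem_erase hq), ?_⟩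
        rw [e, ← mul_prod_erase P (fun x => x) hpP]; ring
      · refine ⟨m, insert p P, hm, ?_, ?_⟩
        · intro q hq
          rcases mem_insert.1 hq with rfl | hq
          · exact ⟨hp, h3⟩
          · exact hP q hq
        · rw [prod_insert hpP, e]; ring
    · refine ⟨p * m, P, isS_mul (isS_prime hp h3) hm, hP, ?_⟩
      rw [e]; ring

open Classical in
lemma sum_inv_isS (x : ℕ) : ∑ n ∈ Icc 1 x, (1:ℝ) / n ≤ (∑ m ∈ Icc 1 x with isS m, (1:ℝ) / m) *
    ∏ p ∈ Icc 1 x with p.Prime ∧ p % 4 = 3, (1 + (1:ℝ) / p) := by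
  have h := fun n (hn : 0 < n) => isS_decomp n hn
  choose! M P hM hP hE using h
  rw [prod_one_add, sum_mul_sum, ← sum_product']
  have hinj : Set.InjOn (fun n => (M n, P n)) (Icc 1 x : Finset ℕ) := by
    intro a ha b hb hab
    simp only [coe_Icc, Set.mem_Icc] at ha hb
    simp only [Prod.mk.injEq] at hab
    rw [hE a ha.1, hE b hb.1, hab.1, hab.2]
  calc ∑ n ∈ Icc 1 x, (1:ℝ) / n = ∑ n ∈ Icc 1 x, (fun z : ℕ × Finset ℕ => (1:ℝ) / z.1 * ∏ p ∈ z.2, (1:ℝ) / p) (M n, P n) := by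
        refine sum_congr rfl fun n hn => ?_
        rw [mem_Icc] at hn
        conv_lhs => rw [hE n hn.1]
        push_cast
        simp only [prod_div_distrib, prod_const_one]
        rw [div_mul_div_comm, one_mul]
    _ = ∑ z ∈ (Icc 1 x).image (fun n => (M n, P n)), (1:ℝ) / z.1 * ∏ p ∈ z.2, (1:ℝ) / p := by
        rw [sum_image hinj]
    _ ≤ _ := by
        refine sum_le_sum_of_subset_of_nonneg ?_ fun z _ _ => by positivity
        intro z hz
        obtain ⟨n, hn, rfl⟩ := mem_image.1 hz
        rw [mem_Icc] at hn
        have e := hE n hn.1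
        have hM1 : M n ∣ n := ⟨_, e⟩
        simp only [mem_product, mem_filter, mem_Icc, mem_powerset]
        refine ⟨⟨⟨Nat.pos_of_dvd_of_pos hM1 hn.1, (Nat.le_of_dvd hn.1 hM1).trans hn.2⟩, hM n hn.1⟩, ?_⟩
        intro p hp
        simp only [mem_filter, mem_Icc]
        have hpn : p ∣ n := by
          rw [e]; exact (dvd_prod_of_mem (fun x => x) hp).mul_left _
        have := hP n hn.1 p hp
        exact ⟨⟨this.1.pos, (Nat.le_of_dvd hn.1 hpn).trans hn.2⟩, this⟩

open Classical in
lemma sum_inv_isS_ge : ∃ c : ℝ, 0 < c ∧ ∀ x : ℕ, 2 ≤ x →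
    c * (Real.log x) ^ (1/2 : ℝ) ≤ ∑ m ∈ Icc 1 x with isS m, (1:ℝ) / m := by
  obtain ⟨C, hC0, hC⟩ := A_sum_le 3 A3_le
  refine ⟨Real.exp (-C), Real.exp_pos _, fun x hx => ?_⟩
  have hl : 0 < Real.log x := Real.log_pos (by exact_mod_cast (by omega : 1 < x))
  have h1 := sum_inv_isS x
  have h2 : Real.log x ≤ ∑ n ∈ Icc 1 x, (1:ℝ) / n := by
    have := log_add_one_le_harmonic x
    rw [harmonic_eq_sum_Icc] at this
    push_cast at this
    simp only [one_div]
    refine le_trans ?_ this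
    exact Real.log_le_log (by exact_mod_cast (by omega : 0 < x)) (by linarith)
  have h3 : ∏ p ∈ Icc 1 x with p.Prime ∧ p % 4 = 3, (1 + (1:ℝ) / p) ≤ Real.exp C * (Real.log x) ^ (1/2 : ℝ) := by
    calc _ ≤ ∏ p ∈ Icc 1 x with p.Prime ∧ p % 4 = 3, Real.exp ((1:ℝ) / p) := by
          refine prod_le_prod (fun p _ => by positivity) fun p _ => ?_
          rw [add_comm]; exact Real.add_one_le_exp _
      _ = Real.exp (∑ p ∈ Icc 1 x with p.Prime ∧ p % 4 = 3, (1:ℝ) / p) := (Real.exp_sum _ _).symm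
      _ ≤ Real.exp (Real.log (Real.log x) / 2 + C) := Real.exp_le_exp.2 (hC x hx)
      _ = _ := by
        rw [Real.rpow_def_of_pos hl, ← Real.exp_add]; congr 1; ring
  have hS : 0 ≤ ∑ m ∈ Icc 1 x with isS m, (1:ℝ) / m := sum_nonneg fun m _ => by positivity
  have h4 := h2.trans (h1.trans (mul_le_mul_of_nonneg_left h3 hS))
  set u := (Real.log x) ^ (1/2 : ℝ) with hu
  have hu0 : 0 < u := Real.rpow_pos_of_pos hl _
  have huu : u * u = Real.log x := by
    rw [hu, ← Real.rpow_add hl]; norm_num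
  rw [← huu] at h4
  have h5 : u ≤ (∑ m ∈ Icc 1 x with isS m, (1:ℝ) / m) * Real.exp C := by
    by_contra hc
    push Not at hc
    nlinarith
  rw [Real.exp_neg, ← div_eq_inv_mul, div_le_iff₀ (Real.exp_pos _)]
  exact h5

open Classical in
lemma card_isS_ge : ∃ c : ℝ, 0 < c ∧ ∃ N0 : ℕ, ∀ N : ℕ, N0 ≤ N →
    c * N * (Real.log N) ^ (-(1/2) : ℝ) ≤ #{n ∈ Icc 1 N | isS n} := by
  obtain ⟨c, hc, hS⟩ := sum_inv_isS_ge
  obtain ⟨K, hK, Y, hY⟩ := primes1_count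
  have hK0 : (0:ℝ) < K := by exact_mod_cast hK
  refine ⟨c / (2 * K) * (1/8) ^ (1/2 : ℝ), by positivity, (K + Y + 2)^4, fun N hN => ?_⟩
  set s := Nat.sqrt N with hs
  set M := Nat.sqrt s with hM
  have hs2 : (K+Y+2)^2 ≤ s := by rw [hs, Nat.le_sqrt']; calc _ = (K+Y+2)^4 := by ring
                                                         _ ≤ N := hN
  have hM2 : K + Y + 2 ≤ M := by rw [hM, Nat.le_sqrt']; exact hs2
  have hMs : M^2 ≤ s := Nat.sqrt_le' s
  have hsN : s^2 ≤ N := Nat.sqrt_le' N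
  have hM4 : M^4 ≤ N := by
    calc M^4 = (M^2)^2 := by ring
      _ ≤ s^2 := Nat.pow_le_pow_left hMs 2
      _ ≤ N := hsN
  have hs3 : s < (M+1)^2 := Nat.lt_succ_sqrt' s
  have hN3 : N < (s+1)^2 := Nat.lt_succ_sqrt' N
  have hN8 : N ≤ M^8 := by
    have h1 : M + 1 ≤ M^2 := by nlinarith
    calc N ≤ (s+1)^2 := hN3.le
      _ ≤ ((M+1)^2)^2 := Nat.pow_le_pow_left hs3 2
      _ ≤ ((M^2)^2)^2 := by gcongr
      _ = M^8 := by ring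
  have hM0 : 0 < M := by omega
  have hM3 : M ≤ M^3 := Nat.le_self_pow (by norm_num) M
  have hy : ∀ m ∈ Icc 1 M, M^3 ≤ N / m := by
    intro m hm
    rw [mem_Icc] at hm
    rw [Nat.le_div_iff_mul_le hm.1]
    calc M^3 * m ≤ M^3 * M := Nat.mul_le_mul_left _ hm.2
      _ = M^4 := by ring
      _ ≤ N := hM4
  have hyK : ∀ m ∈ Icc 1 M, M ≤ N / m / K := by
    intro m hm
    rw [Nat.le_div_iff_mul_le hK]
    refine le_trans ?_ (hy m hm)
    calc M * K ≤ M * M := Nat.mul_le_mul_left _ (by omega)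
      _ ≤ M^3 := by nlinarith [Nat.mul_le_mul hM0 (le_refl (M*M))]
  -- counting
  let T : Finset (Σ _ : ℕ, ℕ) := ({m ∈ Icc 1 M | isS m}).sigma
    (fun m => {p ∈ Icc (N / m / K + 1) (N / m) | p.Prime ∧ p % 4 = 1})
  have hcard : #T ≤ #{n ∈ Icc 1 N | isS n} := by
    refine card_le_card_of_injOn (fun z => z.1 * z.2) ?_ ?_
    · rintro ⟨m, p⟩ hz
      simp only [T, coe_sigma, Set.mem_sigma_iff, mem_coe, mem_filter] at hz ⊢
      obtain ⟨⟨hm, hmS⟩, hp, hpp, hp4⟩ := hz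
      simp only [mem_Icc] at hm hp ⊢
      have : m * p ≤ N := by
        have := (Nat.le_div_iff_mul_le hm.1).1 hp.2
        rwa [mul_comm]
      exact ⟨⟨Nat.mul_pos hm.1 hpp.pos, this⟩, isS_mul hmS (isS_prime hpp (by omega))⟩
    · rintro ⟨m, p⟩ hz ⟨m', p'⟩ hz' he
      simp only [T, coe_sigma, Set.mem_sigma_iff, mem_coe, mem_filter] at hz hz' he
      obtain ⟨⟨hm, hmS⟩, hp, hpp, hp4⟩ := hz
      obtain ⟨⟨hm', hmS'⟩, hp', hpp', hp4'⟩ := hz'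
      have hk := hyK m hm
      simp only [mem_Icc] at hm hp hm' hp'
      have hdvd : p ∣ m' * p' := ⟨m, by rw [← he]; ring⟩
      have hpp2 : p = p' := by
        rcases hpp.dvd_mul.1 hdvd with h | h
        · exfalso
          have := Nat.le_of_dvd hm'.1 h
          omega
        · exact (Nat.prime_dvd_prime_iff_eq hpp hpp').1 h
      subst hpp2
      have := Nat.eq_of_mul_eq_mul_right hpp.pos he
      subst this
      rfl
  have hN0 : (0:ℝ) < N := by
    have : 0 < M^4 := by positivity
    exact_mod_cast (by omega : 0 < N)
  have hlM : 0 < Real.log M := Real.log_pos (by exact_mod_cast (by omega : 1 < M))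
  have hMN : M ≤ N := (Nat.le_self_pow (by norm_num) M).trans hM4
  have hlN : 0 < Real.log N := Real.log_pos (by exact_mod_cast (by omega : 1 < N))
  have hlNM : Real.log N / 8 ≤ Real.log M := by
    have : Real.log N ≤ Real.log ((M:ℝ)^8) := Real.log_le_log hN0 (by exact_mod_cast hN8)
    rw [Real.log_pow] at this; push_cast at this; linarith
  have h1 : (∑ m ∈ Icc 1 M with isS m, (1:ℝ) / m) * (N / (2 * K * Real.log N)) ≤ #T := by
    rw [card_sigma, sum_mul]
    push_cast
    refine sum_le_sum fun m hm => ?_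
    rw [mem_filter] at hm
    have hyy := hy m hm.1
    have hm1 := hm.1
    rw [mem_Icc] at hm1
    have hm0 : (0:ℝ) < m := by exact_mod_cast hm1.1
    refine le_trans ?_ (hY (N / m) (by omega))
    have hy0 : (1:ℝ) < ((N / m : ℕ) : ℝ) := by exact_mod_cast (by omega : 1 < N / m)
    have hl0 : 0 < Real.log ((N / m : ℕ) : ℝ) := Real.log_pos hy0
    have hl1 : Real.log ((N / m : ℕ) : ℝ) ≤ Real.log N :=
      Real.log_le_log (by linarith) (by exact_mod_cast Nat.div_le_self N m)
    have h2 : (N:ℝ) / m ≤ 2 * ((N / m : ℕ) : ℝ) := by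
      rw [div_le_iff₀ hm0]
      have : N < m * (N / m + 1) := Nat.lt_mul_div_succ N hm1.1
      have h3 : (N:ℝ) ≤ m * (((N / m : ℕ) : ℝ) + 1) := by exact_mod_cast this.le
      nlinarith
    calc (1:ℝ) / m * (N / (2 * K * Real.log N)) = (N / m) / 2 / (K * Real.log N) := by field_simp
      _ ≤ ((N / m : ℕ) : ℝ) / (K * Real.log ((N / m : ℕ) : ℝ)) := by
        gcongr; linarith
  have h2 := hS M (by omega)
  have h3 : (#T : ℝ) ≤ #{n ∈ Icc 1 N | isS n} := by exact_mod_cast hcard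
  refine le_trans ?_ (h1.trans h3)
  have h4 : c * (Real.log N / 8) ^ (1/2 : ℝ) ≤ ∑ m ∈ Icc 1 M with isS m, (1:ℝ) / m := by
    refine le_trans ?_ h2
    gcongr
  refine le_trans (le_of_eq ?_) (mul_le_mul_of_nonneg_right h4 (by positivity))
  rw [div_eq_mul_one_div (Real.log N) 8, Real.mul_rpow hlN.le (by norm_num)]
  have e : (Real.log N) ^ (-(1/2) : ℝ) = (Real.log N) ^ (1/2 : ℝ) / Real.log N := by
    rw [← Real.rpow_sub_one hlN.ne']; norm_num
  rw [e]
  field_simp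
end S18

namespace S18
open Finset ArithmeticFunction

lemma primepow_sum (g : ℕ → ℝ) (g0 : ∀ n, 0 ≤ g n)
    (gpp : ∀ p a : ℕ, p.Prime → g (p ^ a) ≤ a + 1) :
    ∃ C : ℝ, 0 < C ∧ ∀ N y : ℕ, y ≤ N → ∑ p ∈ Icc 1 N with p.Prime, ∑ a ∈ Icc 1 N with p ^ a ≤ y,
      g (p ^ a) * (a * Real.log p) ≤ C * y := by
  have s1 : Summable (fun p : ℕ => 2 * (1 / (p:ℝ) ^ (3/2 : ℝ))) :=
    (Real.summable_one_div_nat_rpow.2 (by norm_num)).mul_left 2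
  have s2 : Summable (fun a : ℕ => 4 * (((a:ℝ) + 1) * a * (1/2) ^ a)) := by
    have h1 := summable_pow_mul_geometric_of_norm_lt_one 2 (r := (1/2 : ℝ)) (by norm_num)
    have h2 := summable_pow_mul_geometric_of_norm_lt_one 1 (r := (1/2 : ℝ)) (by norm_num)
    refine ((h1.add h2).mul_left 4).congr fun a => by ring
  set U := ∑' p : ℕ, 2 * (1 / (p:ℝ) ^ (3/2 : ℝ)) with hU
  set V := ∑' a : ℕ, 4 * (((a:ℝ) + 1) * a * (1/2) ^ a) with hV
  have hU0 : 0 ≤ U := tsum_nonneg fun p => by positivity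
  have hV0 : 0 ≤ V := tsum_nonneg fun p => by positivity
  refine ⟨12 + U * V, by positivity, fun N y hy => ?_⟩
  have hterm : ∀ p ∈ {p ∈ Icc 1 N | p.Prime}, ∑ a ∈ Icc 1 N with p ^ a ≤ y, g (p ^ a) * (a * Real.log p)
      ≤ (if p ≤ y then 2 * Λ p else 0) + y * ((2 * (1 / (p:ℝ) ^ (3/2 : ℝ))) * V) := by
    intro p hp
    simp only [mem_filter, mem_Icc] at hp
    have hpp := hp.2
    have hp0 : (0:ℝ) < p := by exact_mod_cast hpp.pos
    have hp2 : (2:ℝ) ≤ p := by exact_mod_cast hpp.two_le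
    have hl : 0 ≤ Real.log p := Real.log_natCast_nonneg p
    have hlp : Real.log p ≤ 2 * (p:ℝ) ^ (1/2 : ℝ) := by
      have := Real.log_le_rpow_div hp0.le (by norm_num : (0:ℝ) < 1/2)
      linarith
    have hpt : ∀ a ∈ {a ∈ Icc 1 N | p ^ a ≤ y}, g (p ^ a) * (a * Real.log p) ≤
        (if a = 1 then (if p ≤ y then 2 * Λ p else 0) else 0) +
         y * ((2 * (1 / (p:ℝ) ^ (3/2 : ℝ))) * (4 * (((a:ℝ) + 1) * a * (1/2) ^ a))) := by
      intro a ha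
      simp only [mem_filter, mem_Icc] at ha
      have hg := gpp p a hpp
      have hnn : 0 ≤ (y:ℝ) * ((2 * (1 / (p:ℝ) ^ (3/2 : ℝ))) * (4 * (((a:ℝ) + 1) * a * (1/2) ^ a))) := by positivity
      have hal : 0 ≤ a * Real.log p := by positivity
      have h1 : g (p ^ a) * (a * Real.log p) ≤ (a + 1) * (a * Real.log p) := mul_le_mul_of_nonneg_right hg hal
      by_cases ha1 : a = 1
      · subst ha1
        rw [pow_one] at ha
        simp only [if_true, ha.2, vonMangoldt_apply_prime hpp]
        push_cast at h1 hnn ⊢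
        linarith
      · rw [if_neg ha1, zero_add]
        refine h1.trans ?_
        obtain ⟨b, rfl⟩ : ∃ b, a = b + 2 := ⟨a - 2, by omega⟩
        have hy1 : (p:ℝ) ^ (b+2) ≤ y := by exact_mod_cast ha.2
        have hy2 : 1 ≤ y * (1 / (p:ℝ)^2) * (1/2)^b := by
          have : (p:ℝ)^2 * 2^b ≤ y := by
            refine le_trans ?_ hy1
            rw [pow_add, mul_comm]; gcongr
          rw [one_div_pow, mul_one_div, mul_one_div, div_div, le_div_iff₀ (by positivity)]
          linarith
        have e3 : (p:ℝ) ^ (1/2 : ℝ) * (1 / (p:ℝ)^2) = 1 / (p:ℝ) ^ (3/2 : ℝ) := by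
          rw [mul_one_div, ← Real.rpow_natCast, ← Real.rpow_sub hp0, one_div ((p:ℝ) ^ (3/2 : ℝ)), ← Real.rpow_neg hp0.le]
          norm_num
        calc (((b+2 : ℕ):ℝ) + 1) * (((b+2 : ℕ):ℝ) * Real.log p)
            ≤ (((b+2 : ℕ):ℝ) + 1) * (((b+2 : ℕ):ℝ) * (2 * (p:ℝ) ^ (1/2 : ℝ))) := by gcongr
          _ ≤ (((b+2 : ℕ):ℝ) + 1) * (((b+2 : ℕ):ℝ) * (2 * (p:ℝ) ^ (1/2 : ℝ))) * (y * (1 / (p:ℝ)^2) * (1/2)^b) :=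
              le_mul_of_one_le_right (by positivity) hy2
          _ = y * ((2 * ((p:ℝ) ^ (1/2 : ℝ) * (1 / (p:ℝ)^2))) * (4 * ((((b+2 : ℕ):ℝ) + 1) * ((b+2 : ℕ):ℝ) * (1/2) ^ (b+2)))) := by
              rw [pow_add]; ring
          _ = _ := by rw [e3]
    refine (sum_le_sum hpt).trans ?_
    rw [sum_add_distrib]
    gcongr ?_ + ?_
    · rw [sum_ite_eq']
      have : 0 ≤ Λ p := vonMangoldt_nonneg
      split_ifs <;> linarith
    · rw [← mul_sum, ← mul_sum]
      gcongr
      exact s2.sum_le_tsum _ (fun a _ => by positivity)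
  refine (sum_le_sum hterm).trans ?_
  rw [sum_add_distrib, ← mul_sum, ← sum_mul]
  have h1 : ∑ p ∈ Icc 1 N with p.Prime, (if p ≤ y then 2 * Λ p else 0) ≤ 12 * y := by
    rw [← sum_filter]
    calc _ ≤ ∑ p ∈ Icc 1 y, 2 * Λ p := by
          refine sum_le_sum_of_subset_of_nonneg ?_ fun n _ _ => mul_nonneg (by norm_num) vonMangoldt_nonneg
          intro p hp
          simp only [mem_filter, mem_Icc] at hp ⊢
          exact ⟨hp.1.1.1, hp.2⟩
      _ ≤ _ := by rw [← mul_sum]; linarith [psi_le y]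
  have h2 : ∑ p ∈ Icc 1 N with p.Prime, 2 * (1 / (p:ℝ) ^ (3/2 : ℝ)) ≤ U :=
    s1.sum_le_tsum _ (fun a _ => by positivity)
  have h3 : (y:ℝ) * ((∑ p ∈ Icc 1 N with p.Prime, 2 * (1 / (p:ℝ) ^ (3/2 : ℝ))) * V) ≤ y * (U * V) := by gcongr
  linarith

lemma log_sum (g : ℕ → ℝ) (g0 : ∀ n, 0 ≤ g n)
    (gm : ∀ {m n : ℕ}, Nat.Coprime m n → g (m * n) = g m * g n)
    (gpp : ∀ p a : ℕ, p.Prime → g (p ^ a) ≤ a + 1) :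
    ∃ C : ℝ, 0 < C ∧ ∀ N : ℕ, ∑ n ∈ Icc 1 N, g n * Real.log n ≤ C * N * ∑ m ∈ Icc 1 N, g m / m := by
  obtain ⟨C, hC, h⟩ := primepow_sum g g0 gpp
  refine ⟨C, hC, fun N => ?_⟩
  let W : Finset (ℕ × ℕ × ℕ) := {z ∈ Icc 1 N ×ˢ ({p ∈ Icc 1 N | p.Prime} ×ˢ Icc 1 N) | z.2.1 ^ z.2.2 ≤ N / z.1}
  let φ : (Σ _ : ℕ, ℕ) → ℕ × ℕ × ℕ := fun z => (ordCompl[z.2] z.1, z.2, z.1.factorization z.2)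
  let S : Finset (Σ _ : ℕ, ℕ) := (Icc 1 N).sigma (fun n => n.primeFactors)
  have hinj : Set.InjOn φ S := by
    rintro ⟨n, p⟩ _ ⟨n', p'⟩ _ he
    simp only [φ, Prod.mk.injEq] at he
    obtain ⟨h1, rfl, h3⟩ := he
    have : n = n' := by
      rw [← Nat.ordProj_mul_ordCompl_eq_self n p, h1, h3, Nat.ordProj_mul_ordCompl_eq_self]
    rw [this]
  calc ∑ n ∈ Icc 1 N, g n * Real.log n = ∑ z ∈ S, g z.1 * (z.1.factorization z.2 * Real.log z.2) := by
        rw [sum_sigma]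
        refine sum_congr rfl fun n hn => ?_
        rw [Real.log_nat_eq_sum_factorization, Finsupp.sum, mul_sum]
        rfl
    _ = ∑ z ∈ S, (fun w : ℕ × ℕ × ℕ => g w.1 * (g (w.2.1 ^ w.2.2) * (w.2.2 * Real.log w.2.1))) (φ z) := by
        refine sum_congr rfl fun z hz => ?_
        obtain ⟨n, p⟩ := z
        simp only [S, mem_sigma, mem_Icc, Nat.mem_primeFactors] at hz
        simp only [φ]
        have hco := (Nat.coprime_ordCompl hz.2.1 hz.2.2.2).pow_left (n.factorization p)
        have := gm hco
        rw [Nat.ordProj_mul_ordCompl_eq_self] at this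
        rw [this]; ring
    _ = ∑ w ∈ S.image φ, g w.1 * (g (w.2.1 ^ w.2.2) * (w.2.2 * Real.log w.2.1)) := by
        rw [sum_image hinj]
    _ ≤ ∑ w ∈ W, g w.1 * (g (w.2.1 ^ w.2.2) * (w.2.2 * Real.log w.2.1)) := by
        refine sum_le_sum_of_subset_of_nonneg ?_ fun w _ _ => 
          mul_nonneg (g0 _) (mul_nonneg (g0 _) (mul_nonneg (by positivity) (Real.log_natCast_nonneg _)))
        intro w hw
        obtain ⟨⟨n, p⟩, hz, rfl⟩ := mem_image.1 hw
        simp only [S, mem_sigma, mem_Icc, Nat.mem_primeFactors] at hz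
        obtain ⟨⟨h1, h2⟩, hp, hd, h0⟩ := hz
        simp only [W, φ, mem_filter, mem_product, mem_Icc]
        have hpos : 0 < ordCompl[p] n := Nat.ordCompl_pos p h0
        refine ⟨⟨⟨hpos, (Nat.ordCompl_le n p).trans h2⟩, ⟨⟨hp.pos, (Nat.le_of_dvd h1 hd).trans h2⟩, hp⟩,
          hp.factorization_pos_of_dvd h0 hd, (Nat.factorization_lt p h0).le.trans h2⟩, ?_⟩
        rw [Nat.le_div_iff_mul_le hpos, Nat.ordProj_mul_ordCompl_eq_self]
        exact h2
    _ = ∑ m ∈ Icc 1 N, g m * ∑ p ∈ Icc 1 N with p.Prime, ∑ a ∈ Icc 1 N with p ^ a ≤ N / m,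
          g (p ^ a) * (a * Real.log p) := by
        simp only [W]
        rw [sum_filter, sum_product]
        refine sum_congr rfl fun m _ => ?_
        rw [sum_product, mul_sum]
        refine sum_congr rfl fun p _ => ?_
        rw [sum_filter, mul_sum]
        refine sum_congr rfl fun a _ => ?_
        split_ifs <;> simp
    _ ≤ ∑ m ∈ Icc 1 N, g m * (C * (N / m)) := by
        refine sum_le_sum fun m hm => ?_
        refine mul_le_mul_of_nonneg_left ?_ (g0 m)
        refine (h N (N / m) (Nat.div_le_self N m)).trans ?_
        gcongr
        exact Nat.cast_div_le
    _ = _ := by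
        rw [mul_sum]
        refine sum_congr rfl fun m _ => by ring

lemma euler_bound (g : ℕ → ℝ) (κ : ℝ) (hκ : 0 ≤ κ) (g0 : ∀ n, 0 ≤ g n) (g1 : g 1 = 1)
    (gm : ∀ {m n : ℕ}, Nat.Coprime m n → g (m * n) = g m * g n)
    (gpp : ∀ p a : ℕ, p.Prime → g (p ^ a) ≤ a + 1)
    (gp1 : ∀ p : ℕ, p.Prime → p % 4 = 1 → g p ≤ κ)
    (gp3 : ∀ p : ℕ, p.Prime → p % 4 = 3 → g p = 0) :
    ∃ C : ℝ, 0 < C ∧ ∀ N : ℕ, 2 ≤ N → ∑ m ∈ Icc 1 N, g m / m ≤ C * (Real.log N) ^ (κ / 2) := by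
  obtain ⟨D, hD0, hD⟩ := A_sum_le 1 A1_le
  have s1 : Summable (fun p : ℕ => 1 / (p:ℝ)^2) := Real.summable_one_div_nat_pow.2 (by norm_num)
  have s2 : Summable (fun a : ℕ => (((a:ℝ) + 3) * (1/2) ^ a)) := by
    have h1 := summable_pow_mul_geometric_of_norm_lt_one 1 (r := (1/2 : ℝ)) (by norm_num)
    have h2 := summable_pow_mul_geometric_of_norm_lt_one 0 (r := (1/2 : ℝ)) (by norm_num)
    refine (h1.add (h2.mul_left 3)).congr fun a => by ring
  set U := ∑' p : ℕ, 1 / (p:ℝ)^2 with hU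
  set V := ∑' a : ℕ, (((a:ℝ) + 3) * (1/2) ^ a) with hV
  have hU0 : 0 ≤ U := tsum_nonneg fun p => by positivity
  have hV0 : 0 ≤ V := tsum_nonneg fun p => by positivity
  let f : ℕ → ℝ := fun n => g n / n
  have f0 : ∀ n, 0 ≤ f n := fun n => div_nonneg (g0 n) (by positivity)
  have f1 : f 1 = 1 := by simp [f, g1]
  have fm : ∀ {m n : ℕ}, Nat.Coprime m n → f (m * n) = f m * f n := by
    intro m n h
    simp only [f, gm h]; push_cast; rw [mul_div_mul_comm]
  have fb : ∀ p : ℕ, p.Prime → ∀ a : ℕ, f (p ^ (a + 2)) ≤ (1 / (p:ℝ)^2) * (((a:ℝ) + 3) * (1/2) ^ a) := by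
    intro p hp a
    have hp2 : (2:ℝ) ≤ p := by exact_mod_cast hp.two_le
    have h := gpp p (a+2) hp
    simp only [f]
    push_cast at h ⊢
    calc g (p ^ (a+2)) / (p:ℝ)^(a+2) ≤ (a + 3) / (p:ℝ)^(a+2) := by gcongr; linarith
      _ ≤ (a+3) / (2^a * (p:ℝ)^2) := by rw [pow_add]; gcongr
      _ = _ := by rw [one_div_pow]; field_simp
  have fs2 : ∀ p : ℕ, p.Prime → Summable (fun a => f (p ^ (a + 2))) := fun p hp =>
    Summable.of_nonneg_of_le (fun a => f0 _) (fb p hp) (s2.mul_left _)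
  have fs : ∀ p : ℕ, p.Prime → Summable (fun a => f (p ^ a)) := fun p hp =>
    (summable_nat_add_iff 2).1 (fs2 p hp)
  have ft : ∀ p : ℕ, p.Prime → ∑' a, f (p ^ a) ≤ Real.exp (g p / p + V * (1 / (p:ℝ)^2)) := by
    intro p hp
    rw [← (fs p hp).sum_add_tsum_nat_add 2]
    have h1 : ∑' a, f (p ^ (a + 2)) ≤ (1 / (p:ℝ)^2) * V := by
      rw [hV, ← tsum_mul_left]
      exact (fs2 p hp).tsum_le_tsum (fb p hp) (s2.mul_left _)
    have h2 : ∑ i ∈ range 2, f (p ^ i) = 1 + g p / p := by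
      simp [sum_range_succ, f1]; rfl
    rw [h2]
    refine le_trans ?_ (Real.add_one_le_exp _)
    linarith
  refine ⟨Real.exp (κ * D + 1 + V * U), Real.exp_pos _, fun N hN => ?_⟩
  have hl : 0 < Real.log N := Real.log_pos (by exact_mod_cast (by omega : 1 < N))
  obtain ⟨hsum, hhas⟩ := EulerProduct.summable_and_hasSum_smoothNumbers_prod_primesBelow_tsum
    (f := f) f1 fm (fun {p} hp => by simpa [Real.norm_of_nonneg (f0 _)] using fs p hp) (N+1)
  have hle : ∑ m ∈ Icc 1 N, f m ≤ ∏ p ∈ (N+1).primesBelow, ∑' n : ℕ, f (p ^ n) := by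
    have hmem : ∀ m ∈ Icc 1 N, m ∈ (N+1).smoothNumbers := by
      intro m hm
      rw [mem_Icc] at hm
      rw [Nat.mem_smoothNumbers_iff_forall_le]
      refine ⟨by omega, fun p hp1 _ _ => by omega⟩
    rw [← hhas.tsum_eq]
    have hi := (summable_subtype_iff_indicator (f := f)).1 hhas.summable
    rw [_root_.tsum_subtype]
    refine le_trans (le_of_eq ?_) (hi.sum_le_tsum (Icc 1 N) (fun n _ => Set.indicator_nonneg (fun x _ => f0 x) n))
    refine sum_congr rfl fun m hm => ?_
    rw [Set.indicator_of_mem (hmem m hm)]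
  refine hle.trans ?_
  have hpe : (N+1).primesBelow = {p ∈ Icc 1 N | p.Prime} := by
    ext p
    simp only [Nat.mem_primesBelow, mem_filter, mem_Icc]
    constructor
    · rintro ⟨h1, h2⟩; exact ⟨⟨h2.pos, by omega⟩, h2⟩
    · rintro ⟨h1, h2⟩; exact ⟨by omega, h2⟩
  rw [hpe]
  have hprod : ∏ p ∈ Icc 1 N with p.Prime, ∑' n : ℕ, f (p ^ n) ≤
      Real.exp (∑ p ∈ Icc 1 N with p.Prime, (g p / p + V * (1 / (p:ℝ)^2))) := by
    rw [Real.exp_sum]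
    refine prod_le_prod (fun p _ => tsum_nonneg fun a => f0 _) fun p hp => ?_
    exact ft p (mem_filter.1 hp).2
  refine hprod.trans ?_
  rw [Real.rpow_def_of_pos hl, ← Real.exp_add, Real.exp_le_exp, sum_add_distrib, ← mul_sum]
  have h1 : ∑ p ∈ Icc 1 N with p.Prime, 1 / (p:ℝ)^2 ≤ U := s1.sum_le_tsum _ (fun p _ => by positivity)
  have h2 : ∑ p ∈ Icc 1 N with p.Prime, g p / p ≤
      κ * ∑ p ∈ Icc 1 N with p.Prime ∧ p % 4 = 1, (1:ℝ) / p + 1 := by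
    have h4 : ∑ n ∈ Icc 1 N, (if n = 2 then (1:ℝ) else 0) ≤ 1 := by
      rw [sum_ite_eq']; split_ifs <;> simp
    refine le_trans ?_ (add_le_add_right h4 _)
    rw [mul_sum, sum_filter, sum_filter, ← sum_add_distrib]
    refine sum_le_sum fun p _ => ?_
    by_cases hp : p.Prime
    · rcases hp.eq_two_or_odd with rfl | ho
      · have := gpp 2 1 hp
        norm_num at this ⊢
        linarith
      · have hne : p ≠ 2 := by rintro rfl; simp at ho
        have : p % 4 = 1 ∨ p % 4 = 3 := by omega
        rcases this with h | h
        · simp only [hp, h, hne, and_self, if_true, if_false, add_zero]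
          rw [mul_one_div]
          gcongr
          exact gp1 p hp h
        · simp [hp, h, hne, gp3 p hp h]
    · have : (0:ℝ) ≤ if p = 2 then (1:ℝ) else 0 := by split_ifs <;> simp
      simp only [hp, false_and, if_false]; linarith
  have h3 := hD N hN
  have h5 := mul_le_mul_of_nonneg_left h3 hκ
  have h6 := mul_le_mul_of_nonneg_left h1 hV0
  linarith

lemma mult_bound (g : ℕ → ℝ) (κ : ℝ) (hκ : 0 ≤ κ) (g0 : ∀ n, 0 ≤ g n) (g1 : g 1 = 1)
    (gm : ∀ {m n : ℕ}, Nat.Coprime m n → g (m * n) = g m * g n)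
    (gpp : ∀ p a : ℕ, p.Prime → g (p ^ a) ≤ a + 1)
    (gp1 : ∀ p : ℕ, p.Prime → p % 4 = 1 → g p ≤ κ)
    (gp3 : ∀ p : ℕ, p.Prime → p % 4 = 3 → g p = 0) :
    ∃ C : ℝ, 0 < C ∧ ∀ N : ℕ, 2 ≤ N → ∑ n ∈ Icc 1 N, g n ≤ C * N * (Real.log N) ^ (κ / 2 - 1) := by
  obtain ⟨C1, hC1, h1⟩ := log_sum g g0 gm gpp
  obtain ⟨C2, hC2, h2⟩ := euler_bound g κ hκ g0 g1 gm gpp gp1 gp3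
  refine ⟨(C1 + 1) * C2, by positivity, fun N hN => ?_⟩
  have hN0 : (0:ℝ) < N := by exact_mod_cast (by omega : 0 < N)
  have hl : 0 < Real.log N := Real.log_pos (by exact_mod_cast (by omega : 1 < N))
  have h3 : ∑ n ∈ Icc 1 N, g n * (Real.log N - Real.log n) ≤ N * ∑ m ∈ Icc 1 N, g m / m := by
    rw [mul_sum]
    refine sum_le_sum fun n hn => ?_
    rw [mem_Icc] at hn
    have hn0 : (0:ℝ) < n := by exact_mod_cast hn.1
    rw [← Real.log_div hN0.ne' hn0.ne']
    have := Real.log_le_sub_one_of_pos (div_pos hN0 hn0)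
    calc g n * Real.log (N / n) ≤ g n * (N / n) := by
          apply mul_le_mul_of_nonneg_left _ (g0 n); linarith
      _ = _ := by ring
  have h4 : (∑ n ∈ Icc 1 N, g n) * Real.log N ≤ (C1 + 1) * N * ∑ m ∈ Icc 1 N, g m / m := by
    have e : (∑ n ∈ Icc 1 N, g n) * Real.log N = ∑ n ∈ Icc 1 N, g n * (Real.log N - Real.log n) +
        ∑ n ∈ Icc 1 N, g n * Real.log n := by
      rw [sum_mul, ← sum_add_distrib]; exact sum_congr rfl fun n _ => by ring
    rw [e]; linarith [h1 N]
  have h5 : (∑ n ∈ Icc 1 N, g n) * Real.log N ≤ (C1 + 1) * N * (C2 * (Real.log N) ^ (κ / 2)) :=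
    h4.trans (mul_le_mul_of_nonneg_left (h2 N hN) (by positivity))
  rw [Real.rpow_sub_one hl.ne', ← mul_div_assoc, le_div_iff₀ hl]
  linarith
end S18

namespace S18
open Finset GaussianInt

abbrev ZI := GaussianInt

lemma norm_eq (z : ZI) : z.norm = z.re ^ 2 + z.im ^ 2 := by
  rw [Zsqrtd.norm_def]; ring

def G (n : ℕ) : Set ZI := {z | z.norm = (n : ℤ)}
def K (n : ℕ) : Set ZI := {z | z.norm = (n : ℤ) ∧ 0 < z.re ∧ 0 ≤ z.im}

lemma r2_eq (n : ℕ) : r2 n = (G n).ncard := by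
  rw [r2]
  refine Set.ncard_congr (fun l _ => (⟨l.1, l.2⟩ : ZI)) ?_ ?_ ?_
  · rintro ⟨a, b⟩ h
    simp only [Set.mem_setOf_eq] at h
    simp only [G, Set.mem_setOf_eq, norm_eq]; exact h
  · rintro ⟨a, b⟩ ⟨c, d⟩ _ _ h
    simp only [Zsqrtd.mk.injEq] at h
    rw [h.1, h.2]
  · rintro z h
    simp only [G, Set.mem_setOf_eq, norm_eq] at h
    exact ⟨(z.re, z.im), h, rfl⟩

lemma G_finite (n : ℕ) : (G n).Finite := by
  have : G n ⊆ (fun l : ℤ × ℤ => (⟨l.1, l.2⟩ : ZI)) '' ((Set.Icc (-(n:ℤ)) n) ×ˢ (Set.Icc (-(n:ℤ)) n)) := by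
    intro z h
    simp only [G, Set.mem_setOf_eq, norm_eq] at h
    refine ⟨(z.re, z.im), ?_, rfl⟩
    simp only [Set.mem_prod, Set.mem_Icc]
    refine ⟨⟨?_, ?_⟩, ?_, ?_⟩ <;> nlinarith [sq_nonneg z.re, sq_nonneg z.im]
  exact ((Set.finite_Icc _ _).prod (Set.finite_Icc _ _)).image _ |>.subset this

lemma K_sub_G (n : ℕ) : K n ⊆ G n := fun _ h => h.1

lemma norm_one_cases {e : ZI} (h : e.norm = 1) : e = 1 ∨ e = -1 ∨ e = ⟨0, 1⟩ ∨ e = ⟨0, -1⟩ := by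
  rw [norm_eq] at h
  obtain ⟨x, y⟩ := e
  simp only at h
  have hx : -1 ≤ x ∧ x ≤ 1 := by constructor <;> nlinarith [sq_nonneg y]
  have hy : -1 ≤ y ∧ y ≤ 1 := by constructor <;> nlinarith [sq_nonneg x]
  obtain ⟨h1, h2⟩ := hx
  obtain ⟨h3, h4⟩ := hy
  interval_cases x <;> interval_cases y <;> simp_all [Zsqrtd.ext_iff]

lemma norm_one_inv {e : ZI} (h : e.norm = 1) : e * star e = 1 := by
  rw [← Zsqrtd.norm_eq_mul_conj, h]; simp

lemma K_exists (w : ZI) (hw : w ≠ 0) : ∃ e : ZI, e.norm = 1 ∧ 0 < (w * e).re ∧ 0 ≤ (w * e).im := by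
  obtain ⟨a, b⟩ := w
  have h0 : ¬ (a = 0 ∧ b = 0) := by
    rintro ⟨rfl, rfl⟩; exact hw rfl
  by_cases h1 : 0 < a ∧ 0 ≤ b
  · exact ⟨1, by simp, by simpa using h1.1, by simpa using h1.2⟩
  by_cases h2 : 0 < b ∧ a ≤ 0
  · refine ⟨⟨0, -1⟩, by simp [norm_eq], ?_, ?_⟩ <;> simp <;> omega
  by_cases h3 : a < 0 ∧ b ≤ 0
  · refine ⟨-1, by simp [norm_eq], ?_, ?_⟩ <;> simp <;> omega
  · refine ⟨⟨0, 1⟩, by simp [norm_eq], ?_, ?_⟩ <;> simp <;> omega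

lemma K_unique {w e : ZI} (he : e.norm = 1) (h1 : 0 < w.re ∧ 0 ≤ w.im) (h2 : 0 < (w * e).re ∧ 0 ≤ (w * e).im) :
    e = 1 := by
  rcases norm_one_cases he with rfl | rfl | rfl | rfl
  · rfl
  all_goals
    exfalso
    simp at h2
    omega

lemma dvd_norm (z : ZI) : z ∣ (z.norm : ZI) := ⟨star z, Zsqrtd.norm_eq_mul_conj z⟩

lemma r2_mul_K {m n : ℕ} (hc : Nat.Coprime m n) (hm : 0 < m) (hn : 0 < n) :
    r2 (m * n) = r2 m * (K n).ncard := by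
  rw [r2_eq, r2_eq, ← Set.ncard_prod]
  symm
  have hcop : IsCoprime ((m:ℤ) : ZI) ((n:ℤ) : ZI) := by
    have : IsCoprime (m:ℤ) (n:ℤ) := Nat.isCoprime_iff_coprime.2 hc
    exact this.map (Int.castRingHom ZI)
  refine Set.ncard_congr (fun x _ => x.1 * x.2) ?_ ?_ ?_
  · rintro ⟨z, w⟩ h
    simp only [Set.mem_prod, G, K, Set.mem_setOf_eq] at h ⊢
    rw [Zsqrtd.norm_mul, h.1, h.2.1]; push_cast; rfl
  · rintro ⟨z, w⟩ ⟨z', w'⟩ h h' he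
    simp only [Set.mem_prod, G, K, Set.mem_setOf_eq] at h h' he
    obtain ⟨hz, hw, hw1⟩ := h
    obtain ⟨hz', hw', hw1'⟩ := h'
    have hzw : IsCoprime z w' := by
      have d1 := dvd_norm z
      have d2 := dvd_norm w'
      rw [hz] at d1; rw [hw'] at d2
      exact (hcop.of_isCoprime_of_dvd_left d1).of_isCoprime_of_dvd_right d2
    have hd : z ∣ z' := hzw.dvd_of_dvd_mul_right ⟨w, he.symm⟩
    obtain ⟨e, rfl⟩ := hd
    have hz0 : z ≠ 0 := by
      rintro rfl; simp at hz; omega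
    have hne : e.norm = 1 := by
      rw [Zsqrtd.norm_mul, hz] at hz'
      have : (m:ℤ) ≠ 0 := by exact_mod_cast hm.ne'
      exact mul_left_cancel₀ this (by rw [hz', mul_one])
    have hwe : w = w' * e := by
      apply mul_left_cancel₀ hz0
      rw [he]; ring
    have he1 : e = 1 := K_unique hne hw1' (by rw [← hwe]; exact hw1)
    subst he1
    simp [hwe]
  · intro u hu
    simp only [G, Set.mem_setOf_eq] at hu
    have hd : u ∣ ((m:ℤ) : ZI) * ((n:ℤ) : ZI) := by
      have := dvd_norm u
      rw [hu] at this; push_cast at this ⊢; exact this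
    obtain ⟨z, w, hz, hw, rfl⟩ := exists_dvd_and_dvd_of_dvd_mul hd
    have nz : ∀ (x : ZI) (k : ℕ), x ∣ ((k:ℤ) : ZI) → x.norm.natAbs ∣ k ^ 2 := by
      rintro x k ⟨y, hy⟩
      have := congrArg Zsqrtd.norm hy
      rw [Zsqrtd.norm_mul, Zsqrtd.norm_intCast] at this
      have h2 : x.norm ∣ ((k ^ 2 : ℕ) : ℤ) := ⟨y.norm, by rw [← this]; push_cast; ring⟩
      exact Int.natAbs_dvd_natAbs.2 h2
    have hz2 := nz z m hz
    have hw2 := nz w n hw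
    have hprod : z.norm.natAbs * w.norm.natAbs = m * n := by
      rw [← Int.natAbs_mul, ← Zsqrtd.norm_mul, hu]; rfl
    have c1 : Nat.Coprime z.norm.natAbs n := Nat.Coprime.coprime_dvd_left hz2 (hc.pow_left 2)
    have c2 : Nat.Coprime w.norm.natAbs m := Nat.Coprime.coprime_dvd_left hw2 (hc.symm.pow_left 2)
    have d1 : z.norm.natAbs ∣ m := c1.dvd_of_dvd_mul_right ⟨_, hprod.symm⟩
    have d2 : w.norm.natAbs ∣ n := c2.dvd_of_dvd_mul_left ⟨z.norm.natAbs, by rw [← hprod]; ring⟩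
    have l1 := Nat.le_of_dvd hm d1
    have l2 := Nat.le_of_dvd hn d2
    have e1 : z.norm.natAbs = m := by
      by_contra hne
      have : z.norm.natAbs < m := lt_of_le_of_ne l1 hne
      have : z.norm.natAbs * w.norm.natAbs < m * n := Nat.mul_lt_mul_of_lt_of_le this l2 hn
      omega
    have e2 : w.norm.natAbs = n := by
      rw [e1] at hprod
      exact Nat.eq_of_mul_eq_mul_left hm hprod
    have e1' : z.norm = m := by rw [← e1]; exact (Int.natAbs_of_nonneg (GaussianInt.norm_nonneg z)).symm
    have e2' : w.norm = n := by rw [← e2]; exact (Int.natAbs_of_nonneg (GaussianInt.norm_nonneg w)).symm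
    have hw0 : w ≠ 0 := by
      rintro rfl; simp at e2'; omega
    obtain ⟨e, he, hk⟩ := K_exists w hw0
    refine ⟨(z * star e, w * e), ?_, ?_⟩
    · simp only [Set.mem_prod, G, K, Set.mem_setOf_eq]
      rw [Zsqrtd.norm_mul, Zsqrtd.norm_mul, Zsqrtd.norm_conj, he, e1', e2']
      exact ⟨mul_one _, mul_one _, hk⟩
    · have := norm_one_inv he
      calc z * star e * (w * e) = z * w * (e * star e) := by ring
        _ = z * w := by rw [this, mul_one]

lemma G_one : G 1 = {1, -1, ⟨0, 1⟩, ⟨0, -1⟩} := by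
  ext z
  simp only [G, Set.mem_setOf_eq, Nat.cast_one, Set.mem_insert_iff, Set.mem_singleton_iff]
  constructor
  · exact norm_one_cases
  · rintro (rfl | rfl | rfl | rfl) <;> simp [norm_eq]

lemma r2_one : r2 1 = 4 := by
  rw [r2_eq, G_one]
  have : ({1, -1, ⟨0, 1⟩, ⟨0, -1⟩} : Set ZI) = (({1, -1, ⟨0, 1⟩, ⟨0, -1⟩} : Finset ZI) : Set ZI) := by simp
  rw [this, Set.ncard_coe_finset]
  decide

lemma r2_K {n : ℕ} (hn : 0 < n) : r2 n = 4 * (K n).ncard := by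
  have := r2_mul_K (m := 1) (n := n) (by simp) one_pos hn
  rwa [one_mul, r2_one] at this

lemma K_mul {m n : ℕ} (hc : Nat.Coprime m n) (hm : 0 < m) (hn : 0 < n) :
    (K (m * n)).ncard = (K m).ncard * (K n).ncard := by
  have h1 := r2_mul_K hc hm hn
  rw [r2_K (Nat.mul_pos hm hn), r2_K hm] at h1
  nlinarith

lemma split_form {p : ℕ} (hp : p.Prime) (π : ZI) (hπ : π.norm = p) (a : ℕ) :
    ∀ z : ZI, z.norm = ((p ^ a : ℕ) : ℤ) → ∃ i < a + 1, ∃ e : ZI, e.norm = 1 ∧ z = e * (π ^ i * star π ^ (a - i)) := by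
  have hp0 : (p:ℤ) ≠ 0 := by exact_mod_cast hp.ne_zero
  have hpr : Prime π := by
    rw [← irreducible_iff_prime]
    constructor
    · intro hu
      rw [Zsqrtd.isUnit_iff_norm_isUnit, hπ] at hu
      have := Int.natAbs_of_isUnit hu
      simp at this
      exact hp.one_lt.ne' this
    · intro a b hab
      have := congrArg Zsqrtd.norm hab
      rw [hπ, Zsqrtd.norm_mul] at this
      have hi := (Nat.prime_iff_prime_int.1 hp).irreducible
      rw [Zsqrtd.isUnit_iff_norm_isUnit, Zsqrtd.isUnit_iff_norm_isUnit]
      exact hi.isUnit_or_isUnit this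
  induction a with
  | zero =>
    intro z hz
    exact ⟨0, by simp, z, by simpa using hz, by simp⟩
  | succ a ih =>
    intro z hz
    have hd : π ∣ z * star z := by
      rw [← Zsqrtd.norm_eq_mul_conj, hz]
      have h1 : π ∣ (p : ZI) := by have := dvd_norm π; rw [hπ] at this; exact_mod_cast this
      push_cast
      exact h1.trans (dvd_pow_self _ (by omega))
    rcases hpr.dvd_or_dvd hd with h | h
    · obtain ⟨w, rfl⟩ := h
      have hw : w.norm = ((p ^ a : ℕ) : ℤ) := by
        rw [Zsqrtd.norm_mul, hπ] at hz
        apply mul_left_cancel₀ hp0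
        rw [hz]; push_cast; ring
      obtain ⟨i, hi, e, he, rfl⟩ := ih w hw
      refine ⟨i + 1, by omega, e, he, ?_⟩
      rw [show a + 1 - (i + 1) = a - i by omega]; ring
    · obtain ⟨w', hw'⟩ := h
      have hz' : z = star π * star w' := by
        have := congrArg star hw'
        rw [star_star] at this
        rw [this, star_mul, mul_comm]
      subst hz'
      have hw : (star w').norm = ((p ^ a : ℕ) : ℤ) := by
        rw [Zsqrtd.norm_mul, Zsqrtd.norm_conj, hπ] at hz
        apply mul_left_cancel₀ hp0
        rw [hz]; push_cast; ring
      obtain ⟨i, hi, e, he, h⟩ := ih _ hw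
      refine ⟨i, by omega, e, he, ?_⟩
      rw [h, show a + 1 - i = (a - i) + 1 by omega]; ring

lemma inert_form {p : ℕ} (hp : p.Prime) (h3 : p % 4 = 3) (a : ℕ) :
    ∀ z : ZI, z.norm = ((p ^ a : ℕ) : ℤ) → ∃ e : ZI, e.norm = 1 ∧ z = e * (p : ZI) ^ (a / 2) := by
  have : Fact p.Prime := ⟨hp⟩
  have hpr := prime_of_nat_prime_of_mod_four_eq_three p h3
  have hp0 : (p:ℤ) ≠ 0 := by exact_mod_cast hp.ne_zero
  induction a using Nat.strong_induction_on with
  | _ a ih =>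
    intro z hz
    rcases Nat.eq_zero_or_pos a with rfl | ha
    · exact ⟨z, by simpa using hz, by simp⟩
    have hd : (p : ZI) ∣ z * star z := by
      rw [← Zsqrtd.norm_eq_mul_conj, hz]
      push_cast
      exact dvd_pow_self _ (by omega)
    have hdz : (p : ZI) ∣ z := by
      rcases hpr.dvd_or_dvd hd with h | h
      · exact h
      · obtain ⟨w', hw'⟩ := h
        have := congrArg star hw'
        rw [star_star, star_mul, star_natCast] at this
        exact ⟨star w', by rw [this, mul_comm]⟩
    obtain ⟨w, rfl⟩ := hdz
    rw [Zsqrtd.norm_mul, Zsqrtd.norm_natCast] at hz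
    have ha2 : 2 ≤ a := by
      by_contra hlt
      have : a = 1 := by omega
      subst this
      rw [pow_one, mul_assoc] at hz
      have h1 : (p:ℤ) * w.norm = 1 := mul_left_cancel₀ hp0 (by rw [hz, mul_one])
      have h2 : (p:ℤ) ∣ 1 := ⟨_, h1.symm⟩
      have : p ∣ 1 := by exact_mod_cast h2
      exact hp.one_lt.ne' (Nat.dvd_one.1 this)
    obtain ⟨b, rfl⟩ : ∃ b, a = b + 2 := ⟨a - 2, by omega⟩
    have hw : w.norm = ((p ^ b : ℕ) : ℤ) := by
      apply mul_left_cancel₀ (mul_ne_zero hp0 hp0)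
      rw [hz]; push_cast; ring
    obtain ⟨e, he, rfl⟩ := ih b (by omega) w hw
    refine ⟨e, he, ?_⟩
    rw [show (b + 2) / 2 = b / 2 + 1 by omega]; ring

lemma G_prime_pow {p : ℕ} (hp : p.Prime) (a : ℕ) : r2 (p ^ a) ≤ 4 * (a + 1) := by
  by_cases h3 : p % 4 = 3
  · have hsub : G (p ^ a) ⊆ (fun e : ZI => e * (p : ZI) ^ (a / 2)) '' G 1 := by
      intro z hz
      obtain ⟨e, he, h⟩ := inert_form hp h3 a z hz
      exact ⟨e, by simpa [G] using he, h.symm⟩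
    have h1 := Set.ncard_le_ncard hsub ((G_finite 1).image _)
    have h2 := Set.ncard_image_le (f := fun e : ZI => e * (p : ZI) ^ (a / 2)) (G_finite 1)
    rw [← r2_eq] at h1
    rw [← r2_eq, r2_one] at h2
    omega
  · have : Fact p.Prime := ⟨hp⟩
    obtain ⟨x, y, hxy⟩ := Nat.Prime.sq_add_sq h3
    let π : ZI := ⟨x, y⟩
    have hπ : π.norm = p := by
      rw [norm_eq]; simp only [π]; exact_mod_cast hxy
    have hsub : G (p ^ a) ⊆ (fun v : ZI × ℕ => v.1 * (π ^ v.2 * star π ^ (a - v.2))) '' (G 1 ×ˢ (range (a+1) : Set ℕ)) := by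
      intro z hz
      obtain ⟨i, hi, e, he, h⟩ := split_form hp π hπ a z hz
      exact ⟨(e, i), ⟨by simpa [G] using he, by simpa using hi⟩, h.symm⟩
    have hf : (G 1 ×ˢ (range (a+1) : Set ℕ)).Finite := (G_finite 1).prod (Finset.finite_toSet _)
    have h1 := Set.ncard_le_ncard hsub (hf.image _)
    have h2 := Set.ncard_image_le (f := fun v : ZI × ℕ => v.1 * (π ^ v.2 * star π ^ (a - v.2))) hf
    rw [Set.ncard_prod, Set.ncard_coe_finset, card_range, ← r2_eq, r2_one] at h2
    rw [← r2_eq] at h1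
    exact h1.trans h2

lemma K_prime_pow {p : ℕ} (hp : p.Prime) (a : ℕ) : (K (p ^ a)).ncard ≤ a + 1 := by
  have := G_prime_pow hp a
  rw [r2_K (pow_pos hp.pos a)] at this
  omega

lemma K_prime3 {p : ℕ} (h3 : p % 4 = 3) : (K p).ncard = 0 := by
  have : K p = ∅ := by
    ext z
    simp only [K, Set.mem_setOf_eq, norm_eq, Set.mem_empty_iff_false, iff_false]
    rintro ⟨h, -⟩
    have h1 : z.re ^ 2 % 4 = 0 ∨ z.re ^ 2 % 4 = 1 := by
      rcases Int.even_or_odd' z.re with ⟨k, hk | hk⟩ <;> rw [hk] <;> ring_nf <;> omega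
    have h2 : z.im ^ 2 % 4 = 0 ∨ z.im ^ 2 % 4 = 1 := by
      rcases Int.even_or_odd' z.im with ⟨k, hk | hk⟩ <;> rw [hk] <;> ring_nf <;> omega
    omega
  rw [this, Set.ncard_empty]

lemma K_prime1 {p : ℕ} (hp : p.Prime) (h1 : p % 4 = 1) : (K p).ncard = 2 := by
  have hle := K_prime_pow hp 1
  rw [pow_one] at hle
  have : 1 < (K p).ncard := by
    rw [Set.one_lt_ncard ((G_finite p).subset (K_sub_G p))]
    have : Fact p.Prime := ⟨hp⟩
    obtain ⟨x, y, hxy⟩ := Nat.Prime.sq_add_sq (p := p) (by omega)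
    have hsq : ∀ t : ℕ, t ^ 2 ≠ p := by
      intro t ht
      exact (Nat.Prime.not_prime_pow (x := t) (n := 2) le_rfl) (ht ▸ hp)
    have hx : 0 < x := by
      rcases Nat.eq_zero_or_pos x with rfl | h
      · exact absurd (by simpa using hxy) (hsq y)
      · exact h
    have hy : 0 < y := by
      rcases Nat.eq_zero_or_pos y with rfl | h
      · exact absurd (by simpa using hxy) (hsq x)
      · exact h
    have hne : x ≠ y := by
      rintro rfl
      omega
    refine ⟨⟨x, y⟩, ?_, ⟨y, x⟩, ?_, ?_⟩
    · simp only [K, Set.mem_setOf_eq, norm_eq]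
      exact ⟨by exact_mod_cast hxy, by exact_mod_cast hx, by positivity⟩
    · simp only [K, Set.mem_setOf_eq, norm_eq]
      exact ⟨by rw [add_comm]; exact_mod_cast hxy, by exact_mod_cast hy, by positivity⟩
    · intro h
      simp only [Zsqrtd.mk.injEq] at h
      exact hne (by exact_mod_cast h.1)
  omega

noncomputable def gt (t : ℝ) (n : ℕ) : ℝ :=
  if n = 0 then 0 else if (K n).ncard = 0 then 0 else ((K n).ncard : ℝ) ^ t

lemma gt_bound (t : ℝ) (ht : t ≤ 1) : ∃ C : ℝ, 0 < C ∧ ∀ N : ℕ, 2 ≤ N →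
    ∑ n ∈ Icc 1 N, gt t n ≤ C * N * (Real.log N) ^ ((2:ℝ) ^ t / 2 - 1) := by
  have K1 : (K 1).ncard = 1 := by
    have := r2_K one_pos
    rw [r2_one] at this; omega
  have g1 : gt t 1 = 1 := by simp [gt, K1]
  refine mult_bound (gt t) ((2:ℝ)^t) (by positivity) ?_ g1 ?_ ?_ ?_ ?_
  · intro n; rw [gt]; split_ifs <;> positivity
  · intro m n hc
    rcases Nat.eq_zero_or_pos m with rfl | hm
    · simp [gt]
    rcases Nat.eq_zero_or_pos n with rfl | hn
    · simp [gt]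
    rw [gt, gt, gt, K_mul hc hm hn]
    by_cases h1 : (K m).ncard = 0
    · simp [h1]
    by_cases h2 : (K n).ncard = 0
    · simp [h2]
    simp only [hm.ne', hn.ne', h1, h2, mul_eq_zero, or_self, if_false]
    push_cast
    rw [Real.mul_rpow (by positivity) (by positivity)]
  · intro p a hp
    rw [gt]
    split_ifs with h1 h2
    · positivity
    · positivity
    · have h3 : (1:ℝ) ≤ ((K (p ^ a)).ncard : ℝ) := by exact_mod_cast Nat.pos_of_ne_zero h2
      calc _ ≤ ((K (p ^ a)).ncard : ℝ) ^ (1:ℝ) := Real.rpow_le_rpow_of_exponent_le h3 ht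
        _ = ((K (p ^ a)).ncard : ℝ) := Real.rpow_one _
        _ ≤ _ := by exact_mod_cast K_prime_pow hp a
  · intro p hp h
    rw [gt, K_prime1 hp h, if_neg hp.ne_zero]; simp
  · intro p hp h
    rw [gt, K_prime3 h]; simp
end S18

namespace S18
open Finset

lemma expo_bound {ε δ t : ℝ} (hδ : 0 < δ) (h1 : δ ≤ 1) (h2 : δ ≤ ε / 2) (ht : |t| = δ) :
    (2:ℝ) ^ t / 2 - 1 - (t * (Real.log 2 / 2) + δ * ε / 2) ≤ -(1/2) - δ * ε / 4 := by
  have l0 : 0 < Real.log 2 := Real.log_pos (by norm_num)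
  have l1 : Real.log 2 ≤ 1 := by have := Real.log_two_lt_d9; linarith
  have habs : |Real.log 2 * t| ≤ δ := by
    rw [abs_mul, ht, abs_of_pos l0]; nlinarith
  have h3 := Real.abs_exp_sub_one_sub_id_le (habs.trans h1)
  have h4 := (abs_le.1 h3).2
  have h5 : (Real.log 2 * t) ^ 2 ≤ δ ^ 2 := by
    rw [← sq_abs]; gcongr
  rw [Real.rpow_def_of_pos (by norm_num)]
  nlinarith

lemma bad_weight {ε δ : ℝ} (hε : 0 < ε) (hδ : 0 < δ) {n N : ℕ} (hn : isS n) (hn0 : 0 < n)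
    (hnN : n ≤ N) (hN : N ≤ n ^ 2)
    (hL : 2 * (ε + 3) / ε ≤ Real.log (Real.log N))
    (hbad : |Real.log (r2 n) / Real.log (Real.log n) - Real.log 2 / 2| > ε) :
    1 ≤ gt δ n * Real.exp (-((δ * (Real.log 2 / 2) + δ * ε / 2) * Real.log (Real.log N)))
      + gt (-δ) n * Real.exp (-(((-δ) * (Real.log 2 / 2) + δ * ε / 2) * Real.log (Real.log N))) := by
  set L := Real.log (Real.log N) with hLdef
  set l := Real.log (Real.log n) with hl
  have l0 : 0 < Real.log 2 := Real.log_pos (by norm_num)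
  have l1 : Real.log 2 ≤ 1 := by have := Real.log_two_lt_d9; linarith
  have hL2 : 2 * (ε + 3) ≤ L * ε := by rwa [div_le_iff₀ hε] at hL
  have hL1 : 2 < L := by
    by_contra h
    push Not at h
    nlinarith
  have hN0 : 0 < N := by omega
  have hlogN : 0 < Real.log N := by
    rcases lt_trichotomy (Real.log N) 0 with h | h | h
    · exact absurd (Real.log_natCast_nonneg N) (by linarith)
    · rw [hLdef, h, Real.log_zero] at hL1; norm_num at hL1
    · exact h
  have hnR : (0:ℝ) < n := by exact_mod_cast hn0
  have hNR : (0:ℝ) < N := by exact_mod_cast hN0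
  have hlogn : Real.log N / 2 ≤ Real.log n := by
    have : Real.log N ≤ Real.log ((n:ℝ) ^ 2) := Real.log_le_log hNR (by exact_mod_cast hN)
    rw [Real.log_pow] at this
    push_cast at this
    linarith
  have hln : 0 < Real.log n := by linarith
  have hlL : l ≤ L := Real.log_le_log hln (Real.log_le_log hnR (by exact_mod_cast hnN))
  have hLl : L - Real.log 2 ≤ l := by
    have := Real.log_le_log (by linarith) hlogn
    rwa [Real.log_div hlogN.ne' (by norm_num)] at this
  have hl0 : 0 < l := by linarith
  have hk : (K n).ncard ≠ 0 := by
    intro h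
    have h0 := r2_K hn0
    rw [h, mul_zero] at h0
    have hfin : {p : ℤ × ℤ | p.1 ^ 2 + p.2 ^ 2 = (n : ℤ)}.Finite := by
      apply Set.Finite.subset (Set.finite_Icc ((-n : ℤ), (-n : ℤ)) ((n : ℤ), (n : ℤ)))
      rintro ⟨a, b⟩ hab
      simp only [Set.mem_setOf_eq] at hab
      have ha : |a| ≤ n := by
        have : |a| ^ 2 ≤ n := by rw [sq_abs]; nlinarith [sq_nonneg b]
        nlinarith [abs_nonneg a]
      have hb : |b| ≤ n := by
        have : |b| ^ 2 ≤ n := by rw [sq_abs]; nlinarith [sq_nonneg a]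
        nlinarith [abs_nonneg b]
      rw [abs_le] at ha hb
      simp only [Set.mem_Icc, Prod.mk_le_mk]
      exact ⟨⟨ha.1, hb.1⟩, ha.2, hb.2⟩
    rw [r2, Set.ncard_eq_zero hfin] at h0
    obtain ⟨a, b, hab⟩ := hn
    have : ((a, b) : ℤ × ℤ) ∈ {p : ℤ × ℤ | p.1 ^ 2 + p.2 ^ 2 = (n : ℤ)} := hab
    rw [h0] at this
    exact this
  have hkpos : (0:ℝ) < (K n).ncard := by exact_mod_cast Nat.pos_of_ne_zero hk
  have hg : ∀ t : ℝ, gt t n = Real.exp (Real.log (K n).ncard * t) := by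
    intro t
    rw [gt, if_neg hn0.ne', if_neg hk, Real.rpow_def_of_pos hkpos]
  set y := Real.log (K n).ncard with hy
  have hx : Real.log (r2 n) = 2 * Real.log 2 + y := by
    rw [r2_K hn0]
    push_cast
    rw [Real.log_mul (by norm_num) hkpos.ne']
    congr 1
    rw [show (4:ℝ) = 2 ^ 2 by norm_num, Real.log_pow]; push_cast; ring
  rw [hx] at hbad
  have h1 : 0 ≤ gt δ n * Real.exp (-((δ * (Real.log 2 / 2) + δ * ε / 2) * L)) := by
    rw [hg]; positivity
  have h2 : 0 ≤ gt (-δ) n * Real.exp (-(((-δ) * (Real.log 2 / 2) + δ * ε / 2) * L)) := by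
    rw [hg]; positivity
  have hs : Real.log 2 * Real.log 2 ≤ 1 := by nlinarith
  rcases lt_abs.1 hbad with h | h
  · have h' : (Real.log 2 / 2 + ε) * l < 2 * Real.log 2 + y := by
      rw [← lt_div_iff₀ hl0]; linarith
    have h3 : Real.log 2 / 2 * L + ε / 2 * L ≤ y := by
      nlinarith
    have : 1 ≤ gt δ n * Real.exp (-((δ * (Real.log 2 / 2) + δ * ε / 2) * L)) := by
      rw [hg, ← Real.exp_add]
      apply Real.one_le_exp
      nlinarith
    linarith
  · have h' : 2 * Real.log 2 + y < (Real.log 2 / 2 - ε) * l := by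
      rw [← div_lt_iff₀ hl0]; linarith
    have h3 : y ≤ Real.log 2 / 2 * L - ε / 2 * L := by
      nlinarith
    have : 1 ≤ gt (-δ) n * Real.exp (-(((-δ) * (Real.log 2 / 2) + δ * ε / 2) * L)) := by
      rw [hg, ← Real.exp_add]
      apply Real.one_le_exp
      nlinarith
    linarith

lemma gt_nonneg (t : ℝ) (n : ℕ) : 0 ≤ gt t n := by
  rw [gt]; split_ifs <;> positivity

lemma bad_count (ε : ℝ) (hε : 0 < ε) : ∃ C η : ℝ, 0 < C ∧ 0 < η ∧ ∃ N0 : ℕ, ∀ N : ℕ, N0 ≤ N →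
    (Set.ncard {n : ℕ | n ≤ N ∧ (∃ a b : ℤ, a ^ 2 + b ^ 2 = (n : ℤ)) ∧
          |Real.log (r2 n) / Real.log (Real.log n) - Real.log 2 / 2| > ε} : ℝ) ≤
      Real.sqrt N + 1 + C * N * (Real.log N) ^ (-(1/2) - η : ℝ) := by
  classical
  set δ := min 1 (ε / 2) with hδd
  have hδ : 0 < δ := lt_min one_pos (by linarith)
  have hδ1 : δ ≤ 1 := min_le_left _ _
  have hδ2 : δ ≤ ε / 2 := min_le_right _ _
  obtain ⟨C1, hC1, H1⟩ := gt_bound δ hδ1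
  obtain ⟨C2, hC2, H2⟩ := gt_bound (-δ) (by linarith)
  have hll : Filter.Tendsto (fun N : ℕ => Real.log (Real.log N)) Filter.atTop Filter.atTop :=
    Real.tendsto_log_atTop.comp (Real.tendsto_log_atTop.comp tendsto_natCast_atTop_atTop)
  have hl : Filter.Tendsto (fun N : ℕ => Real.log N) Filter.atTop Filter.atTop :=
    Real.tendsto_log_atTop.comp tendsto_natCast_atTop_atTop
  obtain ⟨N0, hN0⟩ := Filter.eventually_atTop.1
    ((hll.eventually_ge_atTop (2 * (ε + 3) / ε)).and ((hl.eventually_ge_atTop 1).and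
      (Filter.eventually_ge_atTop 2)))
  refine ⟨C1 + C2, δ * ε / 4, by positivity, by positivity, N0, fun N hN => ?_⟩
  obtain ⟨hL, hlog, hN2⟩ := hN0 N hN
  set w1 := Real.exp (-((δ * (Real.log 2 / 2) + δ * ε / 2) * Real.log (Real.log N))) with hw1
  set w2 := Real.exp (-(((-δ) * (Real.log 2 / 2) + δ * ε / 2) * Real.log (Real.log N))) with hw2
  have hlp : 0 < Real.log N := by linarith
  have key : ∀ (t C : ℝ), 0 < C → |t| = δ →
      (∑ n ∈ Icc 1 N, gt t n ≤ C * N * (Real.log N) ^ ((2:ℝ)^t / 2 - 1)) →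
      (∑ n ∈ Icc 1 N, gt t n) * Real.exp (-((t * (Real.log 2 / 2) + δ * ε / 2) * Real.log (Real.log N)))
        ≤ C * N * (Real.log N) ^ (-(1/2) - δ * ε / 4 : ℝ) := by
    intro t C hC ht h
    calc _ ≤ C * N * (Real.log N) ^ ((2:ℝ)^t / 2 - 1) *
          Real.exp (-((t * (Real.log 2 / 2) + δ * ε / 2) * Real.log (Real.log N))) := by gcongr
      _ = C * N * (Real.log N) ^ ((2:ℝ)^t / 2 - 1 - (t * (Real.log 2 / 2) + δ * ε / 2)) := by
          rw [Real.rpow_def_of_pos hlp, Real.rpow_def_of_pos hlp, mul_assoc, ← Real.exp_add]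
          congr 2; ring
      _ ≤ _ := by
          gcongr ?_ * ?_
          exact Real.rpow_le_rpow_of_exponent_le hlog (expo_bound hδ hδ1 hδ2 ht)
  have k1 := key δ C1 hC1 (abs_of_pos hδ) (H1 N hN2)
  have k2 := key (-δ) C2 hC2 (by rw [abs_neg, abs_of_pos hδ]) (H2 N hN2)
  set B := {n ∈ Icc 1 N | N ≤ n ^ 2 ∧ isS n ∧
          |Real.log (r2 n) / Real.log (Real.log n) - Real.log 2 / 2| > ε} with hB
  have hsub : {n : ℕ | n ≤ N ∧ (∃ a b : ℤ, a ^ 2 + b ^ 2 = (n : ℤ)) ∧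
          |Real.log (r2 n) / Real.log (Real.log n) - Real.log 2 / 2| > ε} ⊆
          ((range (Nat.sqrt N + 1) ∪ B : Finset ℕ) : Set ℕ) := by
    rintro n ⟨h1, h2, h3⟩
    simp only [coe_union, Set.mem_union, mem_coe, mem_range, hB, mem_filter, mem_Icc]
    by_cases h : N ≤ n ^ 2
    · right
      refine ⟨⟨?_, h1⟩, h, h2, h3⟩
      rcases Nat.eq_zero_or_pos n with rfl | h0
      · simp at h; omega
      · exact h0
    · left
      have : n ≤ Nat.sqrt N := by rw [Nat.le_sqrt']; omega
      omega
  have hc := Set.ncard_le_ncard hsub (Finset.finite_toSet _)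
  rw [Set.ncard_coe_finset] at hc
  have hc2 := hc.trans (card_union_le _ _)
  rw [card_range] at hc2
  have hBc : (#B : ℝ) ≤ ∑ n ∈ Icc 1 N, (gt δ n * w1 + gt (-δ) n * w2) := by
    calc (#B : ℝ) = ∑ n ∈ B, 1 := by simp
      _ ≤ ∑ n ∈ B, (gt δ n * w1 + gt (-δ) n * w2) := by
          apply sum_le_sum
          intro n hn
          simp only [hB, mem_filter, mem_Icc] at hn
          exact bad_weight hε hδ hn.2.2.1 hn.1.1 hn.1.2 hn.2.1 hL hn.2.2.2
      _ ≤ _ := by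
          apply sum_le_sum_of_subset_of_nonneg (filter_subset _ _)
          intro n _ _
          have := gt_nonneg δ n
          have := gt_nonneg (-δ) n
          positivity
  rw [sum_add_distrib, ← sum_mul, ← sum_mul] at hBc
  have hsq : (Nat.sqrt N : ℝ) ≤ Real.sqrt N := Real.nat_sqrt_le_real_sqrt
  have hc3 : (Set.ncard {n : ℕ | n ≤ N ∧ (∃ a b : ℤ, a ^ 2 + b ^ 2 = (n : ℤ)) ∧
          |Real.log (r2 n) / Real.log (Real.log n) - Real.log 2 / 2| > ε} : ℝ) ≤
          Nat.sqrt N + 1 + #B := by exact_mod_cast hc2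
  nlinarith

lemma lim_aux (c C η : ℝ) (hη : 0 < η) : Filter.Tendsto (fun N : ℕ =>
    (1 / c) * ((Real.log N) ^ (1/2 : ℝ) / (N : ℝ) ^ (1/2 : ℝ)) +
    (1 / c) * ((Real.log N) ^ (1/2 : ℝ) / (N : ℝ) ^ (1 : ℝ)) +
    C / c * (Real.log N) ^ (-η)) Filter.atTop (nhds 0) := by
  have hl : Filter.Tendsto (fun N : ℕ => Real.log N) Filter.atTop Filter.atTop :=
    Real.tendsto_log_atTop.comp tendsto_natCast_atTop_atTop
  have a1 := ((isLittleO_log_rpow_rpow_atTop (1/2 : ℝ) (s := 1/2) (by norm_num)).tendsto_div_nhds_zero).comp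
    (tendsto_natCast_atTop_atTop (R := ℝ))
  have a2 := ((isLittleO_log_rpow_rpow_atTop (1/2 : ℝ) (s := 1) (by norm_num)).tendsto_div_nhds_zero).comp
    (tendsto_natCast_atTop_atTop (R := ℝ))
  have a3 := (tendsto_rpow_neg_atTop hη).comp hl
  have := ((a1.const_mul (1/c)).add (a2.const_mul (1/c))).add (a3.const_mul (C/c))
  simpa [Function.comp_def] using this

end S18

/-- For almost all n ∈ S (sums of two squares), r₂(n) = (log n)^{(log 2)/2 + o(1)}:
for every ε > 0 the exceptional n ≤ N form a set of size o(#{n ∈ S : n ≤ N}). -/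
theorem stmt18 (ε : ℝ) (hε : 0 < ε) :
    Filter.Tendsto (fun N : ℕ =>
      ((Set.ncard {n : ℕ | n ≤ N ∧ (∃ a b : ℤ, a ^ 2 + b ^ 2 = (n : ℤ)) ∧
          |Real.log (r2 n) / Real.log (Real.log n) - Real.log 2 / 2| > ε} : ℝ) /
        (Set.ncard {n : ℕ | n ≤ N ∧ ∃ a b : ℤ, a ^ 2 + b ^ 2 = (n : ℤ)} : ℝ)))
      Filter.atTop (nhds 0) := by
  classical
  obtain ⟨C, η, hC, hη, N1, H1⟩ := S18.bad_count ε hε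
  obtain ⟨c, hc, N2, H2⟩ := S18.card_isS_ge
  refine tendsto_of_tendsto_of_tendsto_of_le_of_le' tendsto_const_nhds (S18.lim_aux c C η hη)
    (Filter.Eventually.of_forall fun N => by positivity) ?_
  filter_upwards [Filter.eventually_ge_atTop N1, Filter.eventually_ge_atTop N2,
    Filter.eventually_ge_atTop 2] with N h1 h2 h3
  have hb := H1 N h1
  have hs := H2 N h2
  have hNR : (0:ℝ) < N := by exact_mod_cast (by omega : 0 < N)
  have hlog : 0 < Real.log N := Real.log_pos (by exact_mod_cast (by omega : 1 < N))
  have hden : c * N * (Real.log N) ^ (-(1/2) : ℝ) ≤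
      (Set.ncard {n : ℕ | n ≤ N ∧ ∃ a b : ℤ, a ^ 2 + b ^ 2 = (n : ℤ)} : ℝ) := by
    refine hs.trans ?_
    rw [← Set.ncard_coe_finset]
    refine Nat.cast_le.2 (Set.ncard_le_ncard ?_ ?_)
    · intro n hn
      simp only [Finset.coe_filter, Finset.mem_Icc, Set.mem_setOf_eq] at hn
      exact ⟨hn.1.2, hn.2⟩
    · exact (Set.finite_Iic N).subset fun n hn => hn.1
  have hpos : 0 < c * N * (Real.log N) ^ (-(1/2) : ℝ) := by positivity
  refine (div_le_div₀ (by positivity) hb hpos hden).trans (le_of_eq ?_)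
  rw [div_eq_iff hpos.ne']
  have e1 : (Real.log N) ^ (1/2 : ℝ) * (Real.log N) ^ (-(1/2) : ℝ) = 1 := by
    rw [← Real.rpow_add hlog]; norm_num
  have e2 : (Real.log N) ^ (-(1/2) - η : ℝ) = (Real.log N) ^ (-η) * (Real.log N) ^ (-(1/2) : ℝ) := by
    rw [← Real.rpow_add hlog]; congr 1; ring
  have e3 : (N:ℝ) / (N:ℝ) ^ (1/2 : ℝ) = Real.sqrt N := by
    rw [← Real.sqrt_eq_rpow, Real.div_sqrt]
  rw [e2, Real.rpow_one]
  set u := (Real.log N) ^ (1/2 : ℝ)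
  set v := (Real.log N) ^ (-(1/2) : ℝ)
  set z := (Real.log N) ^ (-η)
  rw [← e3]
  have hr : (N:ℝ) ^ (1/2 : ℝ) ≠ 0 := by positivity
  set r := (N:ℝ) ^ (1/2 : ℝ)
  calc (N:ℝ) / r + 1 + C * N * (z * v) = (u * v) * (N / r) + u * v + C * N * (z * v) := by rw [e1]; ring
    _ = _ := by field_simp
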